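/- arXiv:math/0611401 — 7 statements merged into one kernel-verified Lean document; each statement's English description precedes it below -/
import Mathlib

section
/- Let M be a unital C*-algebra and let φ : M → M be a UP map. Suppose N ⊆ M is a ℂ-linear subspace that is closed under the adjoint operation and under the Jordan product, such that φ(N) = N and φ(x ∘ y) = φ(x) ∘ φ(y) for all x, y ∈ N. Then N ⊆ C_φ, the multiplicative core of φ. -/
/-!
On `N` the map `φ` is Jordan-multiplicative and, being positive, it commutes with the adjoint, so
every element of `N` is definite; since `φ` maps `N` into itself, `N ⊆ B_φ`. As `φ` also maps `N`
onto itself, `N = φ^n(N) ⊆ φ^n(B_φ)` for every `n`, that is, `N ⊆ C_φ`.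
-/

/-- The Jordan product `x ∘ y = (x·y + y·x)/2`. -/
noncomputable def jordan {M : Type*} [Ring M] [Algebra ℂ M] (x y : M) : M :=
  (2⁻¹ : ℂ) • (x * y + y * x)

/-- The definite set `M_φ = {x : φ(x* ∘ x) = φ(x)* ∘ φ(x)}` of a UP map `φ`. -/
noncomputable def definiteSet {M : Type*} [Ring M] [StarRing M] [Algebra ℂ M]
    (φ : M →ₗ[ℂ] M) : Set M :=
  {x | φ (jordan (star x) x) = jordan (star (φ x)) (φ x)}

/-- `B_φ = {x : φ^n(x) ∈ M_φ for all n ≥ 0}`. -/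
noncomputable def Bset {M : Type*} [Ring M] [StarRing M] [Algebra ℂ M]
    (φ : M →ₗ[ℂ] M) : Set M :=
  {x | ∀ n : ℕ, (φ ^ n) x ∈ definiteSet φ}

/-- The multiplicative core `C_φ = ⋂_{n ≥ 1} φ^n(B_φ)`. -/
noncomputable def multCore {M : Type*} [Ring M] [StarRing M] [Algebra ℂ M]
    (φ : M →ₗ[ℂ] M) : Set M :=
  ⋂ (n : ℕ) (_ : 1 ≤ n), (φ ^ n) '' (Bset φ)

/-- any self-adjoint Jordan subalgebra `N` with `φ(N) = N` on which `φ` is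
Jordan-multiplicative is contained in the multiplicative core `C_φ`. -/
theorem jordan_subalgebra_subset_multCore
    {M : Type*} [CStarAlgebra M] [PartialOrder M] [StarOrderedRing M]
    (φ : M →ₗ[ℂ] M) (hunit : φ 1 = 1)
    (hpos : ∀ x : M, 0 ≤ x → 0 ≤ φ x)
    (N : Submodule ℂ M)
    (hNstar : ∀ x ∈ N, star x ∈ N)
    (hNjordan : ∀ x ∈ N, ∀ y ∈ N, jordan x y ∈ N)
    (hNinv : φ '' (N : Set M) = (N : Set M))
    (hNmult : ∀ x ∈ N, ∀ y ∈ N, φ (jordan x y) = jordan (φ x) (φ y)) :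
    (N : Set M) ⊆ multCore φ := by
  -- A positive map is Hermitian, because self-adjoint elements are differences of positive ones.
  have hstar : ∀ x : M, φ (star x) = star (φ x) := fun x =>
    map_star (PositiveLinearMap.mk₀ φ hpos) x
  have hmaps : ∀ x ∈ N, φ x ∈ N := fun x hx => by
    have : φ x ∈ φ '' (N : Set M) := ⟨x, hx, rfl⟩
    rwa [hNinv] at this
  have hpow : ∀ (n : ℕ), ∀ x ∈ N, (φ ^ n) x ∈ N := by
    intro n
    induction n with
    | zero => intro x hx; simpa using hx
    | succ k ih =>
      intro x hx
      rw [pow_succ, Module.End.mul_apply]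
      exact ih _ (hmaps x hx)
  have hsurj : ∀ (n : ℕ), ∀ x ∈ N, ∃ y ∈ N, (φ ^ n) y = x := by
    intro n
    induction n with
    | zero => intro x hx; exact ⟨x, hx, by simp⟩
    | succ k ih =>
      intro x hx
      obtain ⟨y, hy, rfl⟩ := ih x hx
      have hy' : y ∈ φ '' (N : Set M) := by rw [hNinv]; exact hy
      obtain ⟨z, hz, rfl⟩ := hy'
      exact ⟨z, hz, by rw [pow_succ, Module.End.mul_apply]⟩
  have hB : ∀ x ∈ N, x ∈ Bset φ := by
    intro x hx n
    have hn := hpow n x hx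
    change φ (jordan (star ((φ ^ n) x)) ((φ ^ n) x)) = _
    rw [hNmult _ (hNstar _ hn) _ hn, hstar]
  intro x hx
  simp only [multCore, Set.mem_iInter]
  intro n _
  obtain ⟨y, hy, hyx⟩ := hsurj n x hx
  exact ⟨y, hB y hy, hyx⟩
end

section
/- Let M be a unital C*-algebra and let E : M → M be a ℂ-linear map such that E(1) = 1, E maps positive elements to positive elements, E ∘ E = E, E is faithful (0 ≤ x and E(x) = 0 imply x = 0), and E satisfies the Schwarz inequality E(x)² ≤ E(x²) for every self-adjoint x ∈ M. Then the range of E is closed under the Jordan product: if x and y lie in the range of E, so does (x·y + y·x)/2. -/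
/-!
A self-adjoint fixed point `a` of `E` satisfies `a² = E(a)² ≤ E(a²)`, and idempotence gives
`E(E(a²) - a²) = 0`, so faithfulness forces `E(a²) = a²`. Polarization extends this to the Jordan
product of two self-adjoint fixed points. Since a positive map preserves the star operation, the
real and imaginary parts of a fixed point are again fixed, and bilinearity of the Jordan product
finishes the argument.
-/

/-- the range of a faithful idempotent unital positive map satisfying the
Schwarz inequality is closed under the Jordan product. -/
theorem range_of_faithful_idempotent_closed_under_jordan
    {M : Type*} [CStarAlgebra M] [PartialOrder M] [StarOrderedRing M]
    (E : M →ₗ[ℂ] M) (hunit : E 1 = 1)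
    (hpos : ∀ x : M, 0 ≤ x → 0 ≤ E x)
    (hidem : ∀ x : M, E (E x) = E x)
    (hfaith : ∀ x : M, 0 ≤ x → E x = 0 → x = 0)
    (hschwarz : ∀ x : M, IsSelfAdjoint x → E x * E x ≤ E (x * x)) :
    ∀ x ∈ Set.range E, ∀ y ∈ Set.range E,
      (2⁻¹ : ℂ) • (x * y + y * x) ∈ Set.range E := by
  have hstar : ∀ x : M, E (star x) = star (E x) := fun x =>
    map_star (PositiveLinearMap.mk₀ E hpos) x
  have hsq : ∀ a : M, IsSelfAdjoint a → E a = a → E (a * a) = a * a := by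
    intro a ha hfix
    have hle : a * a ≤ E (a * a) := by simpa only [hfix] using hschwarz a ha
    exact sub_eq_zero.mp
      (hfaith _ (sub_nonneg.mpr hle) (by rw [map_sub, hidem, sub_self]))
  have hjordan : ∀ a b : M, IsSelfAdjoint a → IsSelfAdjoint b → E a = a → E b = b →
      E (a * b + b * a) = a * b + b * a := by
    intro a b ha hb hfa hfb
    have hpol : a * b + b * a = (a + b) * (a + b) - a * a - b * b := by noncomm_ring
    rw [hpol, map_sub, map_sub, hsq _ (ha.add hb) (by rw [map_add, hfa, hfb]),
      hsq a ha hfa, hsq b hb hfb]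
  have hparts : ∀ x : M, E x = x → ∃ a b : M, IsSelfAdjoint a ∧ IsSelfAdjoint b ∧
      E a = a ∧ E b = b ∧ x = a + Complex.I • b := by
    intro x hx
    refine ⟨realPart x, imaginaryPart x, (realPart x).2, (imaginaryPart x).2, ?_, ?_,
      (realPart_add_I_smul_imaginaryPart x).symm⟩
    · rw [realPart_apply_coe, ← Complex.coe_smul, map_smul, map_add, hstar, hx]
    · rw [imaginaryPart_apply_coe, ← Complex.coe_smul, map_smul, map_smul, map_sub, hstar, hx]
  rintro _ ⟨u, rfl⟩ _ ⟨v, rfl⟩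
  obtain ⟨a, b, ha, hb, hfa, hfb, hx⟩ := hparts (E u) (hidem u)
  obtain ⟨c, d, hc, hd, hfc, hfd, hy⟩ := hparts (E v) (hidem v)
  have hexp : E u * E v + E v * E u = (a * c + c * a) + Complex.I • (a * d + d * a)
      + Complex.I • (b * c + c * b) + Complex.I • Complex.I • (b * d + d * b) := by
    rw [hx, hy]
    simp only [mul_add, add_mul, smul_mul_assoc, mul_smul_comm, smul_add]
    abel
  refine ⟨(2⁻¹ : ℂ) • (E u * E v + E v * E u), ?_⟩
  rw [hexp]
  simp only [map_smul, map_add E (_ + _ + _), map_add E (_ + _) (Complex.I • _),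
    hjordan a c ha hc hfa hfc, hjordan a d ha hd hfa hfd,
    hjordan b c hb hc hfb hfc, hjordan b d hb hd hfb hfd]
end

section
/- Let A and B be unital C*-algebras and let α : A → B be a ℂ-linear map such that α(1) = 1, α maps positive elements to positive elements, α is faithful (0 ≤ f and α(f) = 0 imply f = 0), and α satisfies the Schwarz inequality α(f)² ≤ α(f²) for every self-adjoint f ∈ A. If f ∈ A satisfies 0 ≤ f ≤ 1 and α(f) is idempotent (α(f)² = α(f)), then f is a projection: f² = f. -/
/-!
For `0 ≤ f ≤ 1` the defect `f - f²` is positive, and the Schwarz inequality together with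
idempotence of `α f` gives `α (f - f²) ≤ 0`. Positivity of `α` forces `α (f - f²) = 0`, and
faithfulness then gives `f = f²`.
-/

/-- for a faithful unital positive map `α` satisfying the Schwarz inequality,
any `f` with `0 ≤ f ≤ 1` whose image `α(f)` is idempotent is itself a projection. -/
theorem projection_of_faithful_schwarz_map
    {A B : Type*} [CStarAlgebra A] [PartialOrder A] [StarOrderedRing A]
    [CStarAlgebra B] [PartialOrder B] [StarOrderedRing B]
    (α : A →ₗ[ℂ] B) (hunit : α 1 = 1)
    (hpos : ∀ f : A, 0 ≤ f → 0 ≤ α f)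
    (hfaith : ∀ f : A, 0 ≤ f → α f = 0 → f = 0)
    (hschwarz : ∀ f : A, IsSelfAdjoint f → α f * α f ≤ α (f * f))
    (f : A) (hf0 : 0 ≤ f) (hf1 : f ≤ 1)
    (hidem : α f * α f = α f) :
    f * f = f := by
  -- `f` commutes with `1 - f`, so `f - f² = f (1 - f)` is a product of commuting positives.
  have hnn : 0 ≤ f - f * f := by
    have h : 0 ≤ f * (1 - f) :=
      Commute.mul_nonneg hf0 (sub_nonneg.mpr hf1) ((Commute.one_right f).sub_right rfl)
    rwa [mul_sub, mul_one] at h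
  have hzero : α (f - f * f) = 0 := by
    refine le_antisymm ?_ (hpos _ hnn)
    -- `α f = (α f)² ≤ α (f²)` by idempotence and the Schwarz inequality.
    have h := hschwarz f (IsSelfAdjoint.of_nonneg hf0)
    rw [hidem] at h
    rw [map_sub]
    exact sub_nonpos.mpr h
  exact (sub_eq_zero.mp (hfaith _ hnn hzero)).symm
end

section
/- Let M be a unital C*-algebra that is finite-dimensional as a complex vector space, let φ : M → M be a UP map, and suppose there is a strictly increasing sequence of positive integers n₁ < n₂ < ⋯ and a ℂ-linear map E : M → M such that φ^{n_k} converges to E in operator norm as k → ∞. Then the range of E equals the tail operator system M_∞ of φ. -/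
/-!
A unital positive map is bounded by a constant depending only on the algebra: this is clear on
positive elements, where `0 ≤ x ≤ ‖x‖ • 1`, and every element is a combination of four positive
elements of no larger norm. All powers `φ ^ m` are again unital and positive, so `φ` is power
bounded (`norm_pow_apply_le`).

If `y = E x`, then `y` is the limit of `φ ^ (n k) x = φ ^ m (φ ^ (n k - m) x)`. By power
boundedness these points lie in the image under `φ ^ m` of a fixed ball, which is compact, so `y`
has a preimage under `φ ^ m` in that ball. Conversely, if `y = φ ^ (n k) (x k)` with `x k`
bounded, then `E (x k)` tends to `y`, and the range of `E` is closed, being finite dimensional.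
-/

open Filter Topology

/-- The tail operator system `M_∞` of `φ`: elements `y` admitting a uniformly bounded
sequence of preimages under all powers of `φ`. -/
def tailSystem {M : Type*} [NormedRing M] [NormedAlgebra ℂ M] (φ : M →ₗ[ℂ] M) : Set M :=
  {y | ∃ C > (0 : ℝ), ∀ n : ℕ, 1 ≤ n → ∃ x : M, ‖x‖ ≤ C ∧ (φ ^ n) x = y}

/-- The constant `4 * ‖1‖` is uniform over all unital positive maps, which gives power
boundedness. -/
lemma norm_apply_le_of_unital_positive {M : Type*} [CStarAlgebra M] [PartialOrder M]
    [StarOrderedRing M] (ψ : M →ₗ[ℂ] M) (hunit : ψ 1 = 1) (hpos : ∀ x : M, 0 ≤ x → 0 ≤ ψ x)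
    (x : M) : ‖ψ x‖ ≤ 4 * ‖(1 : M)‖ * ‖x‖ := by
  have hnonneg : ∀ a : M, 0 ≤ a → ‖ψ a‖ ≤ ‖(1 : M)‖ * ‖a‖ := by
    intro a ha
    have h1 : a ≤ algebraMap ℝ M ‖a‖ := IsSelfAdjoint.le_algebraMap_norm_self (.of_nonneg ha)
    have halg : algebraMap ℝ M ‖a‖ = (‖a‖ : ℂ) • (1 : M) := by
      rw [Algebra.algebraMap_eq_smul_one]
      simp
    have h2 := hpos _ (sub_nonneg.mpr h1)
    rw [halg, map_sub, map_smul, hunit, sub_nonneg] at h2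
    have h3 := CStarAlgebra.norm_le_norm_of_nonneg_of_le (hpos a ha) h2
    rw [norm_smul] at h3
    simpa [mul_comm] using h3
  obtain ⟨p, hp, hpn, hsum⟩ := CStarAlgebra.exists_sum_four_nonneg x
  calc ‖ψ x‖ = ‖∑ i : Fin 4, (Complex.I ^ (i : ℕ)) • ψ (p i)‖ := by
        conv_lhs => rw [hsum]
        simp only [map_sum, map_smul]
    _ ≤ ∑ _i : Fin 4, ‖(1 : M)‖ * ‖x‖ := by
        refine norm_sum_le_of_le _ fun i _ => ?_
        rw [norm_smul, norm_pow, Complex.norm_I, one_pow, one_mul]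
        exact (hnonneg _ (hp i)).trans (by gcongr; exact hpn i)
    _ = 4 * ‖(1 : M)‖ * ‖x‖ := by simp; ring

lemma norm_pow_apply_le {M : Type*} [CStarAlgebra M] [PartialOrder M]
    [StarOrderedRing M] (φ : M →ₗ[ℂ] M) (hunit : φ 1 = 1) (hpos : ∀ x : M, 0 ≤ x → 0 ≤ φ x)
    (m : ℕ) (x : M) : ‖(φ ^ m) x‖ ≤ 4 * ‖(1 : M)‖ * ‖x‖ := by
  refine norm_apply_le_of_unital_positive (φ ^ m) ?_ ?_ x
  · induction m with
    | zero => simp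
    | succ m ih => rw [pow_succ, Module.End.mul_apply, hunit, ih]
  · induction m with
    | zero => simp
    | succ m ih =>
      intro a ha
      rw [pow_succ, Module.End.mul_apply]
      exact ih _ (hpos a ha)

/-- if `M` is finite dimensional and some subsequence `φ^{n_k}` of powers of a
UP map `φ` converges in operator norm to a linear map `E`, then the range of `E` is the tail
operator system `M_∞`. -/
theorem range_of_limit_idempotent_eq_tailSystem
    {M : Type*} [CStarAlgebra M] [PartialOrder M] [StarOrderedRing M]
    [FiniteDimensional ℂ M]
    (φ : M →ₗ[ℂ] M) (hunit : φ 1 = 1)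
    (hpos : ∀ x : M, 0 ≤ x → 0 ≤ φ x)
    (n : ℕ → ℕ) (hmono : StrictMono n) (hpos' : ∀ k, 1 ≤ n k)
    (E : M →ₗ[ℂ] M)
    (hconv : Tendsto
      (fun k => ‖LinearMap.toContinuousLinearMap (φ ^ (n k) - E)‖) atTop (𝓝 0)) :
    Set.range E = tailSystem φ := by
  have hbound : ∀ k x, ‖(φ ^ n k) x - E x‖ ≤
      ‖LinearMap.toContinuousLinearMap (φ ^ (n k) - E)‖ * ‖x‖ := fun k x =>
    (LinearMap.toContinuousLinearMap (φ ^ (n k) - E)).le_opNorm x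
  have : ProperSpace M := FiniteDimensional.proper ℂ M
  ext y
  constructor
  · rintro ⟨x, rfl⟩
    -- The summand `1` only serves to make the radius positive when `x = 0`.
    refine ⟨4 * ‖(1 : M)‖ * ‖x‖ + 1, by positivity, fun m _ => ?_⟩
    have hclosed : IsClosed ((φ ^ m) '' Metric.closedBall 0 (4 * ‖(1 : M)‖ * ‖x‖ + 1)) :=
      ((isCompact_closedBall _ _).image (φ ^ m).continuous_of_finiteDimensional).isClosed
    have hlim : Tendsto (fun k => (φ ^ n k) x) atTop (𝓝 (E x)) := by
      rw [tendsto_iff_norm_sub_tendsto_zero]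
      refine squeeze_zero (fun _ => norm_nonneg _) (fun k => hbound k x) ?_
      simpa using hconv.mul_const ‖x‖
    have hmem : E x ∈ (φ ^ m) '' Metric.closedBall 0 (4 * ‖(1 : M)‖ * ‖x‖ + 1) := by
      refine hclosed.mem_of_tendsto hlim ?_
      filter_upwards [hmono.tendsto_atTop.eventually_ge_atTop m] with k hk
      refine ⟨(φ ^ (n k - m)) x, ?_, ?_⟩
      · rw [mem_closedBall_zero_iff]
        linarith [norm_pow_apply_le φ hunit hpos (n k - m) x]
      · rw [← Module.End.mul_apply, ← pow_add, Nat.add_sub_cancel' hk]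
    obtain ⟨z, hz, hzy⟩ := hmem
    exact ⟨z, by simpa using hz, hzy⟩
  · rintro ⟨C, _, hC⟩
    choose x hx hxy using fun k => hC (n k) (hpos' k)
    have hclosed : IsClosed (Set.range E) := by
      rw [← LinearMap.coe_range]
      exact (LinearMap.range E).closed_of_finiteDimensional
    have hlim : Tendsto (fun k => E (x k)) atTop (𝓝 y) := by
      rw [tendsto_iff_norm_sub_tendsto_zero]
      have hzero := hconv.mul_const C
      rw [zero_mul] at hzero
      refine squeeze_zero (fun _ => norm_nonneg _) (fun k => ?_) hzero
      rw [norm_sub_rev]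
      nth_rewrite 1 [← hxy k]
      exact (hbound k (x k)).trans (by gcongr; exact hx k)
    exact hclosed.mem_of_tendsto hlim (Eventually.of_forall fun k => ⟨x k, rfl⟩)
end

section
/- Let M be a unital C*-algebra that is finite-dimensional as a complex vector space, let φ : M → M be a UP map, and let ρ : M → ℂ be a linear functional. Then the sequence s_n = sup{|ρ(φ^n(x))| : x ∈ M, x = x*, ‖x‖ ≤ 1} is nonincreasing and converges, as n → ∞, to sup{|ρ(y)| : y ∈ M_∞, y = y*, ‖y‖ ≤ 1}. -/
/-!
Let `B` be the self-adjoint closed unit ball. It is compact, and a UP map sends it into itself,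
because a self-adjoint `x` lies in `B` exactly when `-1 ≤ x ≤ 1`. Hence the compact sets `φ^n(B)`
decrease, and so do the suprema `s_n` of `|ρ|` over them.

*The tail supremum is at most `s_n`.* The powers of `φ` are bounded by `2`, so a subsequence of them
converges in the finite-dimensional space of operators; this gives indices `1 ≤ i` and `j ≥ i + n`
with `‖φ^j - φ^i‖` small. If `y` is in the tail system, then `y = φ^i(x)` with `‖x‖ ≤ C`, and
therefore `φ^(j-i)(y) - y = (φ^j - φ^i)(x)` is small (`exists_norm_pow_sub_lt`). If in addition
`y ∈ B`, then `y` is a limit of elements `φ^m(y)` with `m ≥ n`, all of which are in `φ^n(B)`.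

*The suprema converge to the tail supremum.* Choose `x_n ∈ B` with `|ρ(φ^n(x_n))|` nearly `s_n`. A
subsequence of `φ^n(x_n)` converges to some `y ∈ B`, which belongs to every closed set `φ^n(B)`,
hence to the tail system (with `C = 1`), and `|ρ(y)| = lim s_n`.
-/

open Filter Topology

section UPMap

variable {M : Type*} [CStarAlgebra M] [PartialOrder M] [StarOrderedRing M]

lemma norm_le_of_neg_algebraMap_le_of_le {a : M} {r : ℝ} (hr : 0 ≤ r) (ha : IsSelfAdjoint a)
    (h₁ : algebraMap ℝ M (-r) ≤ a) (h₂ : a ≤ algebraMap ℝ M r) : ‖a‖ ≤ r := by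
  obtain (h | _) := subsingleton_or_nontrivial M
  · simp [Subsingleton.elim a 0, hr]
  · rw [algebraMap_le_iff_le_spectrum] at h₁
    rw [le_algebraMap_iff_spectrum_le] at h₂
    rcases CStarAlgebra.norm_or_neg_norm_mem_spectrum ha with h | h
    · exact h₂ _ h
    · linarith [h₁ _ h]

/-- A UP map preserves self-adjoint elements and is contractive on them. -/
lemma up_isSelfAdjoint_and_norm_le (φ : M →ₗ[ℂ] M) (hunit : φ 1 = 1)
    (hpos : ∀ x : M, 0 ≤ x → 0 ≤ φ x) {x : M} (hx : IsSelfAdjoint x) :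
    IsSelfAdjoint (φ x) ∧ ‖φ x‖ ≤ ‖x‖ := by
  have halg : ∀ r : ℝ, φ (algebraMap ℝ M r) = algebraMap ℝ M r := fun r => by
    rw [Algebra.algebraMap_eq_smul_one, LinearMap.map_smul_of_tower, hunit]
  have h₁ : 0 ≤ algebraMap ℝ M ‖x‖ - φ x := by
    rw [← halg, ← map_sub]
    exact hpos _ (sub_nonneg.2 hx.le_algebraMap_norm_self)
  have h₂ : 0 ≤ φ x - algebraMap ℝ M (-‖x‖) := by
    rw [← halg, ← map_sub]
    refine hpos _ (sub_nonneg.2 ?_)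
    simpa using hx.neg_algebraMap_norm_le_self
  have hsa : IsSelfAdjoint (φ x) := by
    have h := (IsSelfAdjoint.algebraMap M (.all ‖x‖)).sub (IsSelfAdjoint.of_nonneg h₁)
    simpa using h
  exact ⟨hsa, norm_le_of_neg_algebraMap_le_of_le (norm_nonneg _) hsa
    (sub_nonneg.1 h₂) (sub_nonneg.1 h₁)⟩

lemma up_pow_isSelfAdjoint_and_norm_le (φ : M →ₗ[ℂ] M) (hunit : φ 1 = 1)
    (hpos : ∀ x : M, 0 ≤ x → 0 ≤ φ x) (n : ℕ) {x : M} (hx : IsSelfAdjoint x) :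
    IsSelfAdjoint ((φ ^ n) x) ∧ ‖(φ ^ n) x‖ ≤ ‖x‖ := by
  induction n with
  | zero => simpa using hx
  | succ k ih =>
    rw [pow_succ', Module.End.mul_apply]
    have h := up_isSelfAdjoint_and_norm_le φ hunit hpos ih.1
    exact ⟨h.1, h.2.trans ih.2⟩

/-- The crude constant `2` comes from splitting `x` into real and imaginary parts. -/
lemma up_pow_norm_le_two_mul (φ : M →ₗ[ℂ] M) (hunit : φ 1 = 1)
    (hpos : ∀ x : M, 0 ≤ x → 0 ≤ φ x) (n : ℕ) (x : M) :
    ‖(φ ^ n) x‖ ≤ 2 * ‖x‖ := by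
  have h₁ := (up_pow_isSelfAdjoint_and_norm_le φ hunit hpos n (realPart x).2).2
  have h₂ := (up_pow_isSelfAdjoint_and_norm_le φ hunit hpos n (imaginaryPart x).2).2
  have h₃ : ‖(realPart x : M)‖ ≤ ‖x‖ := realPart.norm_le x
  have h₄ : ‖(imaginaryPart x : M)‖ ≤ ‖x‖ := imaginaryPart.norm_le x
  calc ‖(φ ^ n) x‖
      = ‖(φ ^ n) (realPart x : M) + Complex.I • (φ ^ n) (imaginaryPart x : M)‖ := by
        rw [← map_smul, ← map_add, realPart_add_I_smul_imaginaryPart]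
    _ ≤ ‖(φ ^ n) (realPart x : M)‖ + ‖Complex.I • (φ ^ n) (imaginaryPart x : M)‖ :=
        norm_add_le _ _
    _ ≤ 2 * ‖x‖ := by
        rw [norm_smul, Complex.norm_I, one_mul]
        linarith

/-- Elements of the tail system are recurrent. -/
lemma exists_norm_pow_sub_lt [FiniteDimensional ℂ M] (φ : M →ₗ[ℂ] M) (hunit : φ 1 = 1)
    (hpos : ∀ x : M, 0 ≤ x → 0 ≤ φ x) {y : M} (hy : y ∈ tailSystem φ) (n : ℕ)
    {ε : ℝ} (hε : 0 < ε) : ∃ m, n ≤ m ∧ ‖(φ ^ m) y - y‖ < ε := by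
  obtain ⟨C, hC, hyC⟩ := hy
  let F : ℕ → (M →L[ℂ] M) := fun k => LinearMap.toContinuousLinearMap (φ ^ k)
  have hF : ∀ k, F k ∈ Metric.closedBall (0 : M →L[ℂ] M) 2 := fun k => by
    rw [mem_closedBall_zero_iff]
    exact ContinuousLinearMap.opNorm_le_bound _ (by norm_num)
      (up_pow_norm_le_two_mul φ hunit hpos k)
  have : ProperSpace (M →L[ℂ] M) := FiniteDimensional.proper ℂ _
  obtain ⟨P, -, u, hu, hlim⟩ := tendsto_subseq_of_bounded Metric.isBounded_closedBall hF
  obtain ⟨N, hN⟩ := Metric.cauchySeq_iff.1 hlim.cauchySeq (ε / C) (by positivity)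
  have hi : N + 1 ≤ u (N + 1) := hu.id_le _
  have hj : n + u (N + 1) ≤ u (n + (N + 1)) := hu.add_le_nat n (N + 1)
  obtain ⟨x, hxC, hxy⟩ := hyC (u (N + 1)) (by omega)
  refine ⟨u (n + (N + 1)) - u (N + 1), by omega, ?_⟩
  have hd := hN (n + (N + 1)) (by omega) (N + 1) (by omega)
  rw [dist_eq_norm] at hd
  have heq : (φ ^ (u (n + (N + 1)) - u (N + 1))) y - y
      = (F (u (n + (N + 1))) - F (u (N + 1))) x := by
    rw [← hxy, ← Module.End.mul_apply, ← pow_add, Nat.sub_add_cancel (by omega)]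
    rfl
  rw [heq]
  calc ‖(F (u (n + (N + 1))) - F (u (N + 1))) x‖
      ≤ ‖F (u (n + (N + 1))) - F (u (N + 1))‖ * ‖x‖ := ContinuousLinearMap.le_opNorm _ _
    _ ≤ ‖F (u (n + (N + 1))) - F (u (N + 1))‖ * C := by gcongr
    _ < ε / C * C := by gcongr; exact hd
    _ = ε := by field_simp

end UPMap

/-- for a UP map `φ` on a finite-dimensional C*-algebra and a linear functional
`ρ`, the suprema `sup {|ρ(φ^n x)| : x = x*, ‖x‖ ≤ 1}` decrease and converge to
`sup {|ρ(y)| : y ∈ M_∞, y = y*, ‖y‖ ≤ 1}`. -/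
theorem sup_over_selfadjoint_ball_tendsto_tail
    {M : Type*} [CStarAlgebra M] [PartialOrder M] [StarOrderedRing M]
    [FiniteDimensional ℂ M]
    (φ : M →ₗ[ℂ] M) (hunit : φ 1 = 1)
    (hpos : ∀ x : M, 0 ≤ x → 0 ≤ φ x)
    (ρ : M →ₗ[ℂ] ℂ) :
    Antitone (fun n : ℕ =>
        sSup {c : ℝ | ∃ x : M, IsSelfAdjoint x ∧ ‖x‖ ≤ 1 ∧ c = ‖ρ ((φ ^ n) x)‖}) ∧
      Tendsto (fun n : ℕ =>
          sSup {c : ℝ | ∃ x : M, IsSelfAdjoint x ∧ ‖x‖ ≤ 1 ∧ c = ‖ρ ((φ ^ n) x)‖}) atTop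
        (𝓝 (sSup {c : ℝ | ∃ y ∈ tailSystem φ, IsSelfAdjoint y ∧ ‖y‖ ≤ 1 ∧ c = ‖ρ y‖})) := by
  have hρ : Continuous ρ := ρ.continuous_of_finiteDimensional
  have hφ : ∀ n : ℕ, Continuous ⇑(φ ^ n) := fun n => (φ ^ n).continuous_of_finiteDimensional
  have hproper : ProperSpace M := FiniteDimensional.proper ℂ M
  set s : ℕ → ℝ := fun n =>
    sSup {c : ℝ | ∃ x : M, IsSelfAdjoint x ∧ ‖x‖ ≤ 1 ∧ c = ‖ρ ((φ ^ n) x)‖} with hs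
  set t : ℝ := sSup {c : ℝ | ∃ y ∈ tailSystem φ, IsSelfAdjoint y ∧ ‖y‖ ≤ 1 ∧ c = ‖ρ y‖} with ht
  set B : Set M := {x | IsSelfAdjoint x ∧ ‖x‖ ≤ 1} with hB
  have hBcomp : IsCompact B := by
    have : B = Metric.closedBall 0 1 ∩ {x | star x = x} := by
      ext x
      simp [hB, IsSelfAdjoint, and_comm]
    rw [this]
    exact (isCompact_closedBall 0 1).inter_right (isClosed_eq continuous_star continuous_id)
  have hmaps : ∀ n, ∀ x ∈ B, (φ ^ n) x ∈ B := fun n x hx => by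
    have h := up_pow_isSelfAdjoint_and_norm_le φ hunit hpos n hx.1
    exact ⟨h.1, h.2.trans hx.2⟩
  obtain ⟨K, hK⟩ : ∃ K, ∀ x ∈ B, ‖ρ x‖ ≤ K :=
    hBcomp.exists_bound_of_continuousOn hρ.continuousOn
  have hbdd : ∀ n, BddAbove {c : ℝ | ∃ x : M, IsSelfAdjoint x ∧ ‖x‖ ≤ 1 ∧
      c = ‖ρ ((φ ^ n) x)‖} := fun n => by
    refine ⟨K, ?_⟩
    rintro c ⟨x, hx, hx1, rfl⟩
    exact hK _ (hmaps n x ⟨hx, hx1⟩)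
  have hle : ∀ n, ∀ x ∈ B, ‖ρ ((φ ^ n) x)‖ ≤ s n := fun n x hx =>
    le_csSup (hbdd n) ⟨x, hx.1, hx.2, rfl⟩
  have hne : ∀ n, {c : ℝ | ∃ x : M, IsSelfAdjoint x ∧ ‖x‖ ≤ 1 ∧
      c = ‖ρ ((φ ^ n) x)‖}.Nonempty := fun n => ⟨_, 0, .zero M, by simp, rfl⟩
  have hanti : Antitone s := by
    intro m n hmn
    refine csSup_le (hne n) ?_
    rintro c ⟨x, hx, hx1, rfl⟩
    have h := hle m _ (hmaps (n - m) x ⟨hx, hx1⟩)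
    rwa [← Module.End.mul_apply, ← pow_add, Nat.add_sub_cancel' hmn] at h
  refine ⟨hanti, ?_⟩
  have htail_le : ∀ y ∈ tailSystem φ, y ∈ B → ∀ n, ‖ρ y‖ ≤ s n := by
    intro y hy hyB n
    have hmem : y ∈ closure {z | ‖ρ z‖ ≤ s n} := by
      rw [Metric.mem_closure_iff]
      intro ε hε
      obtain ⟨m, hnm, hm⟩ := exists_norm_pow_sub_lt φ hunit hpos hy n hε
      refine ⟨(φ ^ m) y, (hle m y hyB).trans (hanti hnm), ?_⟩
      rwa [dist_comm, dist_eq_norm]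
    rwa [(isClosed_le hρ.norm continuous_const).closure_eq] at hmem
  have htne : {c : ℝ | ∃ y ∈ tailSystem φ, IsSelfAdjoint y ∧ ‖y‖ ≤ 1 ∧ c = ‖ρ y‖}.Nonempty :=
    ⟨_, 0, ⟨1, one_pos, fun n _ => ⟨0, by simp, by simp⟩⟩, .zero M, by simp, rfl⟩
  have htbdd : BddAbove {c : ℝ | ∃ y ∈ tailSystem φ, IsSelfAdjoint y ∧ ‖y‖ ≤ 1 ∧ c = ‖ρ y‖} := by
    refine ⟨K, ?_⟩
    rintro c ⟨y, -, hy, hy1, rfl⟩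
    exact hK _ ⟨hy, hy1⟩
  have hts : ∀ n, t ≤ s n := fun n => by
    refine csSup_le htne ?_
    rintro c ⟨y, hyt, hy, hy1, rfl⟩
    exact htail_le y hyt ⟨hy, hy1⟩ n
  have hlim : Tendsto s atTop (𝓝 (⨅ n, s n)) :=
    tendsto_atTop_ciInf hanti ⟨t, by rintro _ ⟨n, rfl⟩; exact hts n⟩
  suffices h : (⨅ n, s n) = t by rwa [h] at hlim
  refine le_antisymm ?_ (le_ciInf hts)
  have hx : ∀ n : ℕ, ∃ x ∈ B, s n - 1 / ((n : ℝ) + 1) < ‖ρ ((φ ^ n) x)‖ := fun n => by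
    obtain ⟨c, ⟨x, hx, hx1, rfl⟩, hc⟩ := exists_lt_of_lt_csSup (hne n)
      (sub_lt_self (s n) (Nat.one_div_pos_of_nat (α := ℝ) (n := n)))
    exact ⟨x, ⟨hx, hx1⟩, hc⟩
  choose x hxB hxs using hx
  obtain ⟨y, hyB, u, hu, hyu⟩ := hBcomp.tendsto_subseq fun n => hmaps n (x n) (hxB n)
  have hyt : y ∈ tailSystem φ := by
    refine ⟨1, one_pos, fun n _ => ?_⟩
    have hcl : IsClosed ((φ ^ n) '' B) := (hBcomp.image (hφ n)).isClosed
    obtain ⟨z, hz, hzy⟩ : y ∈ (φ ^ n) '' B := by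
      refine hcl.mem_of_tendsto hyu ?_
      filter_upwards [eventually_ge_atTop n] with k hk
      have hnk : n ≤ u k := hk.trans (hu.id_le k)
      refine ⟨_, hmaps (u k - n) (x (u k)) (hxB _), ?_⟩
      rw [← Module.End.mul_apply, ← pow_add, Nat.add_sub_cancel' hnk]
      rfl
    exact ⟨z, hz.2, hzy⟩
  have h₁ : Tendsto (fun k => s (u k) - 1 / ((u k : ℝ) + 1)) atTop (𝓝 ((⨅ n, s n) - 0)) :=
    (hlim.sub tendsto_one_div_add_atTop_nhds_zero_nat).comp hu.tendsto_atTop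
  rw [sub_zero] at h₁
  have h₂ : (⨅ n, s n) ≤ ‖ρ y‖ :=
    le_of_tendsto_of_tendsto' h₁ ((hρ.norm.tendsto y).comp hyu) fun k => (hxs (u k)).le
  exact h₂.trans (le_csSup htbdd ⟨y, hyt, hyB.1, hyB.2, rfl⟩)
end

section
/- Let M be a unital C*-algebra that is finite-dimensional as a complex vector space and let φ : M → M be a UP map such that for every positive element x ∈ M, ‖φ^n(x)‖ → 0 as n → ∞ implies x = 0. Then the tail operator system M_∞ equals the multiplicative core C_φ. -/
/-!
Positive unital maps satisfy the Jordan form of the Kadison–Schwarz inequality,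
`φ(x)* ∘ φ(x) ≤ φ(x* ∘ x)` (`kadison_jordan`); in finite dimension this follows from the spectral
decomposition of self-adjoint elements. They are contractive on nonnegative elements, so
`‖φ^n z‖` decreases for `z ≥ 0`, and their powers are bounded in norm by `4`.

By compactness some powers `φ^(m k)` converge to an operator `Q`, and powers `φ^(d k)`, with
`d k → ∞` differences of exponents `m`, converge to an operator `P` with `P Q = Q P = Q`
(`exists_limit_operators`). Every `y ∈ M_∞` lies in the range of `Q`, so `φ^(d k) y → y`.

For `M_∞ ⊆ C_φ`: Kadison–Schwarz in the limit gives `y* ∘ y ≤ P (y* ∘ y)`; the difference is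
annihilated by `Q`, so it vanishes by norm detection. Hence
`φ^(d k) (y* ∘ y) - (φ^(d k) y)* ∘ (φ^(d k) y) → 0`. This sequence dominates the images under
`φ^(d k - 1)` of the nonnegative defect `φ(y* ∘ y) - φ(y)* ∘ φ(y)`, which is therefore zero, i.e.
`M_∞ ⊆ M_φ`. As `φ` maps `M_∞` onto itself, `M_∞ ⊆ C_φ`.

For `C_φ ⊆ M_∞`: compactness of the set of nonnegative unit vectors turns norm detection into a
uniform bound `c ‖z‖ ≤ ‖φ^n z‖` for `z ≥ 0` (`exists_uniform_lower_bound`). If `y = φ^n x` with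
`x ∈ B_φ`, then `φ^n (x* ∘ x) = y* ∘ y`, so `‖x‖² ≤ 2 ‖x* ∘ x‖ ≤ 2 ‖y* ∘ y‖ / c` independently
of `n`.
-/

open Filter Topology

/-! ### Positive unital maps -/

section PositiveUnital

variable {M : Type*} [CStarAlgebra M]

lemma spectrum_real_finite [FiniteDimensional ℂ M] (a : M) : (spectrum ℝ a).Finite := by
  have hfd : FiniteDimensional ℝ M := FiniteDimensional.complexToReal M
  have hint : IsIntegral ℝ a := Algebra.IsIntegral.isIntegral a
  refine ((minpoly ℝ a).roots.toFinset.finite_toSet).subset fun r hr => ?_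
  have h := spectrum.subset_polynomial_aeval a (minpoly ℝ a) ⟨r, hr, rfl⟩
  rw [minpoly.aeval] at h
  have h0 : Polynomial.eval r (minpoly ℝ a) = 0 := by
    by_contra hne
    rw [spectrum.mem_iff, sub_zero] at h
    exact h ((IsUnit.mk0 _ hne).map (algebraMap ℝ M))
  simpa [minpoly.ne_zero hint] using h0

/-- For `x = a + i b` with `a`, `b` self-adjoint, `x* ∘ x = a² + b²`. -/
lemma jordan_star_add_I_smul {a b : M} (ha : IsSelfAdjoint a) (hb : IsSelfAdjoint b) :
    jordan (star (a + Complex.I • b)) (a + Complex.I • b) = a * a + b * b := by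
  have hs : star (a + Complex.I • b) = a - Complex.I • b := by
    rw [star_add, star_smul, ha.star_eq, hb.star_eq]
    simp [sub_eq_add_neg]
  rw [jordan, hs]
  have : (a - Complex.I • b) * (a + Complex.I • b) + (a + Complex.I • b) * (a - Complex.I • b)
      = (2 : ℂ) • (a * a + b * b) := by
    simp only [sub_mul, mul_sub, add_mul, mul_add, smul_mul_assoc, mul_smul_comm, smul_add,
      smul_sub, smul_smul, Complex.I_mul_I, two_smul, neg_smul, one_smul]
    abel
  rw [this, smul_smul]
  norm_num

lemma two_smul_jordan (x y : M) : (2 : ℝ) • jordan x y = x * y + y * x := by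
  rw [jordan, ← Complex.coe_smul, smul_smul]
  norm_num

lemma pow_map_one (φ : M →ₗ[ℂ] M) (hunit : φ 1 = 1) (n : ℕ) : (φ ^ n) 1 = 1 := by
  induction n with
  | zero => simp
  | succ n ih => rw [pow_succ, Module.End.mul_apply, hunit, ih]

variable [PartialOrder M]

lemma pow_map_nonneg (φ : M →ₗ[ℂ] M) (hpos : ∀ x : M, 0 ≤ x → 0 ≤ φ x) (n : ℕ) :
    ∀ x : M, 0 ≤ x → 0 ≤ (φ ^ n) x := by
  induction n with
  | zero => simp
  | succ n ih =>
    intro x hx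
    rw [pow_succ, Module.End.mul_apply]
    exact ih _ (hpos x hx)

variable [StarOrderedRing M]

/-- A self-adjoint element is a difference of two nonnegative ones, so positive linear maps
preserve self-adjointness. -/
lemma isSelfAdjoint_map_of_pos (φ : M →ₗ[ℂ] M) (hpos : ∀ x : M, 0 ≤ x → 0 ≤ φ x)
    {a : M} (ha : IsSelfAdjoint a) : IsSelfAdjoint (φ a) := by
  have h : φ a = φ (a⁺) - φ (a⁻) := by
    rw [← map_sub, CFC.posPart_sub_negPart a ha]
  rw [h]
  exact (IsSelfAdjoint.of_nonneg (hpos _ (CFC.posPart_nonneg a))).sub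
    (IsSelfAdjoint.of_nonneg (hpos _ (CFC.negPart_nonneg a)))

/-- Spectral decomposition `a = ∑ λ p_λ` of a self-adjoint element of a finite-dimensional
C*-algebra. Only positivity of the spectral projections and the three moments are recorded. -/
lemma exists_spectral_decomposition [FiniteDimensional ℂ M] {a : M} (ha : IsSelfAdjoint a) :
    ∃ (s : Finset ℝ) (p : ℝ → M), (∀ r, 0 ≤ p r) ∧ ∑ r ∈ s, p r = 1 ∧
      ∑ r ∈ s, (r : ℂ) • p r = a ∧ ∑ r ∈ s, ((r : ℂ) ^ 2) • p r = a * a := by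
  classical
  have hfin := spectrum_real_finite a
  have hcont : ∀ f : ℝ → ℝ, ContinuousOn f (spectrum ℝ a) := fun f => hfin.continuousOn f
  have key : ∀ g : ℝ → ℝ, ∑ r ∈ hfin.toFinset, ((g r : ℝ) : ℂ) •
      cfc (fun t : ℝ => if t = r then (1 : ℝ) else 0) a = cfc g a := by
    intro g
    have : ∀ r : ℝ, ((g r : ℝ) : ℂ) • cfc (fun t : ℝ => if t = r then (1 : ℝ) else 0) a
        = cfc (fun t : ℝ => g r * if t = r then (1 : ℝ) else 0) a := by
      intro r
      rw [cfc_const_mul _ _ _ (hcont _), Complex.coe_smul]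
    simp_rw [this]
    rw [← cfc_sum _ a _ (fun i _ => hcont _)]
    refine cfc_congr fun t ht => ?_
    simp only [Finset.sum_apply]
    rw [Finset.sum_eq_single t]
    · simp
    · intro b _ hb
      simp [Ne.symm hb]
    · intro h
      exact absurd (hfin.mem_toFinset.2 ht) h
  refine ⟨hfin.toFinset, fun r => cfc (fun t : ℝ => if t = r then (1 : ℝ) else 0) a,
    fun r => cfc_nonneg fun t _ => by split_ifs <;> norm_num, ?_, ?_, ?_⟩
  · have := key (fun _ => 1)
    rw [cfc_const_one ℝ a] at this
    simpa using this
  · have := key (fun t => t)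
    rwa [cfc_id' ℝ a] at this
  · have := key (fun t => t ^ 2)
    rw [cfc_pow_id (R := ℝ) a 2, sq] at this
    simpa using this

/-- Kadison's inequality on self-adjoint elements: with `a = ∑ λ p_λ` and `h = φ a`,
`φ (a²) - h² = ∑ (λ - h) φ(p_λ) (λ - h)`, a sum of nonnegative terms. -/
lemma kadison_selfAdjoint [FiniteDimensional ℂ M] (φ : M →ₗ[ℂ] M) (hunit : φ 1 = 1)
    (hpos : ∀ x : M, 0 ≤ x → 0 ≤ φ x) {a : M} (ha : IsSelfAdjoint a) :
    φ a * φ a ≤ φ (a * a) := by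
  obtain ⟨s, p, hp, h0, h1, h2⟩ := exists_spectral_decomposition ha
  have hsa := isSelfAdjoint_map_of_pos φ hpos ha
  have e0 := congrArg φ h0
  have e1 := congrArg φ h1
  have e2 := congrArg φ h2
  simp only [map_sum, map_smul, hunit] at e0 e1 e2
  rw [← sub_nonneg]
  have hnn : 0 ≤ ∑ r ∈ s, ((r : ℂ) • (1 : M) - φ a) * φ (p r) * ((r : ℂ) • (1 : M) - φ a) := by
    refine Finset.sum_nonneg fun r _ => ?_
    have hr : IsSelfAdjoint ((r : ℂ) • (1 : M) - φ a) := by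
      refine IsSelfAdjoint.sub ?_ hsa
      rw [Complex.coe_smul]
      exact (IsSelfAdjoint.all r).smul (IsSelfAdjoint.one M)
    exact hr.conjugate_nonneg (hpos _ (hp r))
  have hterm : ∀ r : ℝ, ((r : ℂ) • (1 : M) - φ a) * φ (p r) * ((r : ℂ) • (1 : M) - φ a)
      = ((r : ℂ) ^ 2) • φ (p r) - ((r : ℂ) • φ (p r)) * φ a - φ a * ((r : ℂ) • φ (p r))
        + φ a * φ (p r) * φ a := by
    intro r
    simp only [sub_mul, mul_sub, smul_mul_assoc, mul_smul_comm, one_mul, mul_one, smul_sub,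
      smul_smul, sq]
    abel
  simp_rw [hterm] at hnn
  rw [Finset.sum_add_distrib, Finset.sum_sub_distrib, Finset.sum_sub_distrib, ← Finset.sum_mul,
    ← Finset.mul_sum, ← Finset.sum_mul, ← Finset.mul_sum, e0, e1, e2] at hnn
  convert hnn using 1
  noncomm_ring

/-- The Jordan form of the Kadison–Schwarz inequality: `φ(x)* ∘ φ(x) ≤ φ(x* ∘ x)`. -/
lemma kadison_jordan [FiniteDimensional ℂ M] (φ : M →ₗ[ℂ] M) (hunit : φ 1 = 1)
    (hpos : ∀ x : M, 0 ≤ x → 0 ≤ φ x) (x : M) :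
    jordan (star (φ x)) (φ x) ≤ φ (jordan (star x) x) := by
  have ha : IsSelfAdjoint (realPart x : M) := (realPart x).2
  have hb : IsSelfAdjoint (imaginaryPart x : M) := (imaginaryPart x).2
  rw [← realPart_add_I_smul_imaginaryPart x, map_add, map_smul, jordan_star_add_I_smul ha hb,
    jordan_star_add_I_smul (isSelfAdjoint_map_of_pos φ hpos ha)
      (isSelfAdjoint_map_of_pos φ hpos hb), map_add]
  exact add_le_add (kadison_selfAdjoint φ hunit hpos ha) (kadison_selfAdjoint φ hunit hpos hb)

lemma jordan_star_self_nonneg (x : M) : 0 ≤ jordan (star x) x := by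
  have h : jordan (star x) x = (2⁻¹ : ℝ) • (star x * x + x * star x) := by
    rw [jordan, ← Complex.coe_smul]
    norm_num
  rw [h]
  exact smul_nonneg (by norm_num) (add_nonneg (star_mul_self_nonneg x) (mul_star_self_nonneg x))

lemma norm_sq_le_norm_jordan (x : M) : ‖x‖ ^ 2 ≤ 2 * ‖jordan (star x) x‖ := by
  have h : star x * x ≤ (2 : ℝ) • jordan (star x) x := by
    rw [two_smul_jordan]
    exact le_add_of_nonneg_right (mul_star_self_nonneg x)
  have := CStarAlgebra.norm_le_norm_of_nonneg_of_le (star_mul_self_nonneg x) h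
  rw [CStarRing.norm_star_mul_self, norm_smul] at this
  simpa [sq] using this

lemma norm_map_le_of_nonneg (φ : M →ₗ[ℂ] M) (hunit : φ 1 = 1)
    (hpos : ∀ x : M, 0 ≤ x → 0 ≤ φ x) {x : M} (hx : 0 ≤ x) : ‖φ x‖ ≤ ‖x‖ := by
  rw [CStarAlgebra.norm_le_iff_le_algebraMap _ (norm_nonneg x) (hpos x hx), ← sub_nonneg]
  have h : 0 ≤ algebraMap ℝ M ‖x‖ - x :=
    sub_nonneg.2 (IsSelfAdjoint.le_algebraMap_norm_self (IsSelfAdjoint.of_nonneg hx))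
  have himg := hpos _ h
  have e : φ (algebraMap ℝ M ‖x‖) = algebraMap ℝ M ‖x‖ := by
    rw [Algebra.algebraMap_eq_smul_one, ← Complex.coe_smul, map_smul, hunit]
  rwa [map_sub, e] at himg

/-- The constant `4` comes from writing `x` as a combination of four nonnegative elements of norm
at most `‖x‖`; the optimal constant `1` is not needed. -/
lemma norm_map_le (φ : M →ₗ[ℂ] M) (hunit : φ 1 = 1)
    (hpos : ∀ x : M, 0 ≤ x → 0 ≤ φ x) (x : M) : ‖φ x‖ ≤ 4 * ‖x‖ := by
  obtain ⟨y, hy_nonneg, hy_norm, hy⟩ := CStarAlgebra.exists_sum_four_nonneg x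
  conv_lhs => rw [hy]
  simp only [map_sum, map_smul]
  refine (norm_sum_le _ _).trans ?_
  simp only [norm_smul, norm_pow, Complex.norm_I, one_pow, one_mul]
  refine (Finset.sum_le_sum (g := fun _ => ‖x‖) fun i _ => ?_).trans (by simp)
  exact (norm_map_le_of_nonneg φ hunit hpos (hy_nonneg i)).trans (hy_norm i)

lemma norm_pow_antitone (φ : M →ₗ[ℂ] M) (hunit : φ 1 = 1)
    (hpos : ∀ x : M, 0 ≤ x → 0 ≤ φ x) {x : M} (hx : 0 ≤ x) :
    Antitone fun n : ℕ => ‖(φ ^ n) x‖ := by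
  refine antitone_nat_of_succ_le fun n => ?_
  rw [pow_succ', Module.End.mul_apply]
  exact norm_map_le_of_nonneg φ hunit hpos (pow_map_nonneg φ hpos n x hx)

/-- Since `‖φ^n x‖` decreases for `x ≥ 0`, norm detection only needs decay along a
subsequence. -/
lemma eq_zero_of_tendsto_subseq (φ : M →ₗ[ℂ] M) (hunit : φ 1 = 1)
    (hpos : ∀ x : M, 0 ≤ x → 0 ≤ φ x)
    (hdet : ∀ x : M, 0 ≤ x → Tendsto (fun n : ℕ => ‖(φ ^ n) x‖) atTop (𝓝 0) → x = 0)
    {x : M} (hx : 0 ≤ x) {s : ℕ → ℕ} (hs : Tendsto s atTop atTop)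
    (h : Tendsto (fun k => (φ ^ s k) x) atTop (𝓝 0)) : x = 0 :=
  hdet x hx ((tendsto_iff_tendsto_subseq_of_antitone (norm_pow_antitone φ hunit hpos hx) hs).2
    (by simpa [Function.comp_def] using h.norm))

end PositiveUnital

/-! ### Limit operators of a power-bounded operator -/

/-- The powers of a power-bounded operator `T` in finite dimension accumulate at some `Q`, and
some limit `P` of powers `T ^ d k` with `d k → ∞` acts as the identity on the range of `Q`:
take `d k` to be differences of the exponents along which `T ^ m k → Q`. -/
lemma exists_limit_operators {E : Type*} [NormedAddCommGroup E] [NormedSpace ℂ E]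
    [FiniteDimensional ℂ E] (T : E →L[ℂ] E) {K : ℝ} (hK : ∀ n : ℕ, ‖T ^ n‖ ≤ K) :
    ∃ (m d : ℕ → ℕ) (Q P : E →L[ℂ] E), Tendsto m atTop atTop ∧ Tendsto d atTop atTop ∧
      Tendsto (fun k => T ^ m k) atTop (𝓝 Q) ∧ Tendsto (fun k => T ^ d k) atTop (𝓝 P) ∧
      P * Q = Q ∧ Q * P = Q := by
  have : ProperSpace (E →L[ℂ] E) := FiniteDimensional.proper ℂ _
  have hb : ∀ n : ℕ, T ^ n ∈ Metric.closedBall (0 : E →L[ℂ] E) K := fun n => by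
    simpa using hK n
  obtain ⟨Q, -, m, hm, hQ⟩ :=
    tendsto_subseq_of_bounded (x := fun n : ℕ => T ^ n) Metric.isBounded_closedBall hb
  obtain ⟨P, -, θ, hθ, hP⟩ :=
    tendsto_subseq_of_bounded (x := fun k : ℕ => T ^ (m (2 * k) - m k))
      Metric.isBounded_closedBall (fun k => hb _)
  simp only [Function.comp_def] at hQ hP
  have hle : ∀ k, m k ≤ m (2 * k) := fun k => hm.monotone (by omega)
  have hge : ∀ k, k ≤ m (2 * k) - m k := fun k => by
    have := hm.add_le_nat k k
    rw [← two_mul] at this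
    omega
  have h2 : Tendsto (fun k => 2 * θ k) atTop atTop :=
    tendsto_atTop_mono (fun k => by omega) hθ.tendsto_atTop
  have hQθ := hQ.comp hθ.tendsto_atTop
  have hQ2 := hQ.comp h2
  simp only [Function.comp_def] at hQθ hQ2
  refine ⟨m, fun k => m (2 * θ k) - m (θ k), Q, P, hm.tendsto_atTop,
    tendsto_atTop_mono (fun k => hge (θ k)) hθ.tendsto_atTop, hQ, hP, ?_, ?_⟩
  · refine tendsto_nhds_unique (hP.mul hQθ) (hQ2.congr fun k => ?_)
    rw [← pow_add, Nat.sub_add_cancel (hle _)]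
  · refine tendsto_nhds_unique (hQθ.mul hP) (hQ2.congr fun k => ?_)
    rw [← pow_add, Nat.add_sub_cancel' (hle _)]

/-! ### The tail system -/

lemma tendsto_clm_apply {E : Type*} [NormedAddCommGroup E] [NormedSpace ℂ E]
    {T : ℕ → E →L[ℂ] E} {S : E →L[ℂ] E} {u : ℕ → E} {x : E} (hT : Tendsto T atTop (𝓝 S))
    (hu : Tendsto u atTop (𝓝 x)) : Tendsto (fun k => T k (u k)) atTop (𝓝 (S x)) :=
  (isBoundedBilinearMap_apply.continuous.tendsto (S, x)).comp (hT.prodMk_nhds hu)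

section Tail

variable {M : Type*} [CStarAlgebra M]

lemma continuous_jordan_star_self : Continuous fun x : M => jordan (star x) x := by
  unfold jordan
  fun_prop

lemma continuous_pow_map [FiniteDimensional ℂ M] (φ : M →ₗ[ℂ] M) (n : ℕ) :
    Continuous (φ ^ n : M →ₗ[ℂ] M) :=
  LinearMap.continuous_of_finiteDimensional _

lemma toContinuousLinearMap_pow_apply [FiniteDimensional ℂ M] (φ : M →ₗ[ℂ] M)
    (n : ℕ) (x : M) :
    (LinearMap.toContinuousLinearMap φ ^ n) x = (φ ^ n) x := by
  induction n with
  | zero => simp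
  | succ n ih =>
    rw [pow_succ', pow_succ', mul_apply_eq_comp, ih, Module.End.mul_apply]
    rfl

/-- Tail elements lie in the range of every limit `Q` of powers of `φ`: if `y = φ^(m k) u_k` with
`u_k` bounded and `φ^(m k) → Q`, then `y = Q x` for any limit point `x` of `u_k`. -/
lemma exists_eq_apply_of_mem_tailSystem [FiniteDimensional ℂ M] (φ : M →ₗ[ℂ] M)
    {m : ℕ → ℕ} {Q : M →L[ℂ] M} (hm : Tendsto m atTop atTop)
    (hQ : Tendsto (fun k => LinearMap.toContinuousLinearMap φ ^ m k) atTop (𝓝 Q))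
    {y : M} (hy : y ∈ tailSystem φ) : ∃ x, Q x = y := by
  have : ProperSpace M := FiniteDimensional.proper ℂ M
  obtain ⟨C, hC, h⟩ := hy
  -- The exponent `m k` may vanish for small `k`, so preimages are chosen only when `1 ≤ m k`.
  have h' : ∀ k, ∃ x : M, ‖x‖ ≤ C ∧ (1 ≤ m k → (φ ^ m k) x = y) := fun k => by
    by_cases hk : 1 ≤ m k
    · obtain ⟨x, hx, hxy⟩ := h _ hk
      exact ⟨x, hx, fun _ => hxy⟩
    · exact ⟨0, by simpa using hC.le, fun h => absurd h hk⟩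
  choose u hu huy using h'
  obtain ⟨x, -, θ, hθ, hx⟩ := tendsto_subseq_of_bounded (x := u)
    (Metric.isBounded_closedBall (x := (0 : M)) (r := C))
    (fun k => mem_closedBall_zero_iff.2 (hu k))
  refine ⟨x, tendsto_nhds_unique (tendsto_clm_apply (hQ.comp hθ.tendsto_atTop) hx) ?_⟩
  refine tendsto_const_nhds.congr' ?_
  filter_upwards [(hm.comp hθ.tendsto_atTop).eventually_ge_atTop 1] with k hk
  simp only [Function.comp_apply] at hk ⊢
  rw [toContinuousLinearMap_pow_apply, huy _ hk]

variable [PartialOrder M] [StarOrderedRing M]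

lemma tailSystem_map_mem (φ : M →ₗ[ℂ] M) (hunit : φ 1 = 1)
    (hpos : ∀ x : M, 0 ≤ x → 0 ≤ φ x) {y : M} (hy : y ∈ tailSystem φ) (n : ℕ) :
    (φ ^ n) y ∈ tailSystem φ := by
  obtain ⟨C, hC, h⟩ := hy
  refine ⟨4 * C, by positivity, fun j hj => ?_⟩
  obtain ⟨x, hx, rfl⟩ := h j hj
  refine ⟨(φ ^ n) x, (norm_map_le (φ ^ n) (pow_map_one φ hunit n)
    (pow_map_nonneg φ hpos n) x).trans (by gcongr), ?_⟩
  rw [← Module.End.mul_apply, ← Module.End.mul_apply, ← pow_add, ← pow_add, add_comm]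

variable [FiniteDimensional ℂ M]

/-- `φ` maps the tail system onto itself: a limit point of the vectors `φ^(k+1) u_k`, where
`φ^(n+k+1) u_k = y` with `u_k` bounded, is a preimage of `y` under `φ^n` that lies in the image of
a fixed ball under every power of `φ`. -/
lemma exists_tailSystem_preimage (φ : M →ₗ[ℂ] M) (hunit : φ 1 = 1)
    (hpos : ∀ x : M, 0 ≤ x → 0 ≤ φ x) {y : M} (hy : y ∈ tailSystem φ) (n : ℕ) :
    ∃ x ∈ tailSystem φ, (φ ^ n) x = y := by
  have : ProperSpace M := FiniteDimensional.proper ℂ M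
  have hbd : ∀ (j : ℕ) (x : M), ‖(φ ^ j) x‖ ≤ 4 * ‖x‖ := fun j =>
    norm_map_le (φ ^ j) (pow_map_one φ hunit j) (pow_map_nonneg φ hpos j)
  obtain ⟨C, hC, h⟩ := hy
  choose u hu huy using fun k : ℕ => h (n + (k + 1)) (by omega)
  have hball : ∀ k j : ℕ, (φ ^ j) (u k) ∈ Metric.closedBall (0 : M) (4 * C) := fun k j => by
    rw [mem_closedBall_zero_iff]
    exact (hbd j (u k)).trans (by gcongr; exact hu k)
  obtain ⟨x, -, θ, hθ, hx⟩ := tendsto_subseq_of_bounded (x := fun k : ℕ => (φ ^ (k + 1)) (u k))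
    Metric.isBounded_closedBall (fun k => hball k (k + 1))
  refine ⟨x, ⟨4 * C, by positivity, fun j _ => ?_⟩, ?_⟩
  · have hclosed : IsClosed ((φ ^ j) '' Metric.closedBall (0 : M) (4 * C)) :=
      ((isCompact_closedBall _ _).image (continuous_pow_map φ j)).isClosed
    have hmem : x ∈ (φ ^ j) '' Metric.closedBall (0 : M) (4 * C) := by
      refine hclosed.mem_of_tendsto hx ?_
      filter_upwards [hθ.tendsto_atTop.eventually_ge_atTop j] with k hk
      refine ⟨_, hball (θ k) (θ k + 1 - j), ?_⟩
      rw [← Module.End.mul_apply, ← pow_add, Nat.add_sub_cancel' (by omega)]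
      rfl
    obtain ⟨v, hv, hvx⟩ := hmem
    exact ⟨v, mem_closedBall_zero_iff.1 hv, hvx⟩
  · refine tendsto_nhds_unique (((continuous_pow_map φ n).tendsto x).comp hx) ?_
    refine tendsto_const_nhds.congr fun k => ?_
    simp only [Function.comp_apply]
    rw [← Module.End.mul_apply, ← pow_add, huy]

lemma norm_toContinuousLinearMap_pow_le (φ : M →ₗ[ℂ] M) (hunit : φ 1 = 1)
    (hpos : ∀ x : M, 0 ≤ x → 0 ≤ φ x) (n : ℕ) :
    ‖LinearMap.toContinuousLinearMap φ ^ n‖ ≤ 4 :=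
  ContinuousLinearMap.opNorm_le_bound _ (by norm_num) fun x => by
    rw [toContinuousLinearMap_pow_apply]
    exact norm_map_le (φ ^ n) (pow_map_one φ hunit n) (pow_map_nonneg φ hpos n) x

/-- Every element `y` of the tail system is definite. Its powers return to `y` along `d k`, so
Kadison–Schwarz makes `P (y* ∘ y) - y* ∘ y` nonnegative; it is killed by `Q`, hence zero. Then
`φ^(d k - 1)` of the nonnegative defect `φ (y* ∘ y) - φ(y)* ∘ φ(y)` is squeezed to zero. -/
lemma tailSystem_subset_definiteSet (φ : M →ₗ[ℂ] M) (hunit : φ 1 = 1)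
    (hpos : ∀ x : M, 0 ≤ x → 0 ≤ φ x)
    (hdet : ∀ x : M, 0 ≤ x → Tendsto (fun n : ℕ => ‖(φ ^ n) x‖) atTop (𝓝 0) → x = 0) :
    tailSystem φ ⊆ definiteSet φ := by
  intro y hy
  obtain ⟨m, d, Q, P, hm, hd, hQ, hP, hPQ, hQP⟩ := exists_limit_operators
    (LinearMap.toContinuousLinearMap φ) (norm_toContinuousLinearMap_pow_le φ hunit hpos)
  have hQx : ∀ x, Tendsto (fun k => (φ ^ m k) x) atTop (𝓝 (Q x)) := fun x => by
    simpa only [toContinuousLinearMap_pow_apply] using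
      tendsto_clm_apply hQ (tendsto_const_nhds (x := x))
  have hPx : ∀ x, Tendsto (fun k => (φ ^ d k) x) atTop (𝓝 (P x)) := fun x => by
    simpa only [toContinuousLinearMap_pow_apply] using
      tendsto_clm_apply hP (tendsto_const_nhds (x := x))
  have hks : ∀ (n : ℕ) (x : M),
      jordan (star ((φ ^ n) x)) ((φ ^ n) x) ≤ (φ ^ n) (jordan (star x) x) := fun n =>
    kadison_jordan (φ ^ n) (pow_map_one φ hunit n) (pow_map_nonneg φ hpos n)
  have hPy : P y = y := by
    obtain ⟨x, rfl⟩ := exists_eq_apply_of_mem_tailSystem φ hm hQ hy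
    rw [← mul_apply_eq_comp, hPQ]
  have hret : Tendsto (fun k => jordan (star ((φ ^ d k) y)) ((φ ^ d k) y)) atTop
      (𝓝 (jordan (star y) y)) := by
    have := (continuous_jordan_star_self.tendsto (P y)).comp (hPx y)
    rwa [hPy] at this
  have hfix : P (jordan (star y) y) = jordan (star y) y := by
    have hz : 0 ≤ P (jordan (star y) y) - jordan (star y) y :=
      sub_nonneg.2 (le_of_tendsto_of_tendsto' hret (hPx _) fun k => hks _ _)
    refine sub_eq_zero.1 (eq_zero_of_tendsto_subseq φ hunit hpos hdet hz hm ?_)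
    have := hQx (P (jordan (star y) y) - jordan (star y) y)
    rwa [map_sub, ← mul_apply_eq_comp, hQP, sub_self] at this
  have hw : 0 ≤ φ (jordan (star y) y) - jordan (star (φ y)) (φ y) :=
    sub_nonneg.2 (kadison_jordan φ hunit hpos y)
  have hd1 : Tendsto (fun k => d k - 1) atTop atTop :=
    (tendsto_sub_atTop_nat 1).comp hd
  refine sub_eq_zero.1 (eq_zero_of_tendsto_subseq φ hunit hpos hdet hw hd1 ?_)
  have hup : Tendsto (fun k => (φ ^ d k) (jordan (star y) y)
      - jordan (star ((φ ^ d k) y)) ((φ ^ d k) y)) atTop (𝓝 0) := by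
    have := (hPx (jordan (star y) y)).sub hret
    rwa [hfix, sub_self] at this
  refine squeeze_zero_norm' ?_ (tendsto_norm_zero.comp hup)
  filter_upwards [hd.eventually_ge_atTop 1] with k hk
  refine CStarAlgebra.norm_le_norm_of_nonneg_of_le (pow_map_nonneg φ hpos _ _ hw) ?_
  have hstep : ∀ x, (φ ^ (d k - 1)) (φ x) = (φ ^ d k) x := fun x => by
    rw [← Module.End.mul_apply, ← pow_succ, Nat.sub_add_cancel hk]
  rw [map_sub, hstep]
  refine sub_le_sub_left ?_ _
  have := hks (d k - 1) (φ y)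
  rwa [hstep] at this

/-! ### The multiplicative core -/

lemma pow_jordan_of_mem_Bset {N : Type*} [Ring N] [StarRing N] [Algebra ℂ N]
    (φ : N →ₗ[ℂ] N) {x : N} (hx : x ∈ Bset φ) (n : ℕ) :
    (φ ^ n) (jordan (star x) x) = jordan (star ((φ ^ n) x)) ((φ ^ n) x) := by
  induction n with
  | zero => simp
  | succ n ih =>
    rw [pow_succ', Module.End.mul_apply, ih, Module.End.mul_apply]
    exact hx n

/-- Norm detection is uniform: `Q` does not vanish on the compact set of nonnegative unit vectors,
and `‖Q z‖ ≤ ‖φ^n z‖` by monotonicity of `‖φ^n z‖`. -/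
lemma exists_uniform_lower_bound (φ : M →ₗ[ℂ] M) (hunit : φ 1 = 1)
    (hpos : ∀ x : M, 0 ≤ x → 0 ≤ φ x)
    (hdet : ∀ x : M, 0 ≤ x → Tendsto (fun n : ℕ => ‖(φ ^ n) x‖) atTop (𝓝 0) → x = 0) :
    ∃ c > (0 : ℝ), ∀ z : M, 0 ≤ z → ∀ n : ℕ, c * ‖z‖ ≤ ‖(φ ^ n) z‖ := by
  have : ProperSpace M := FiniteDimensional.proper ℂ M
  obtain ⟨m, d, Q, P, hm, -, hQ, -, -, -⟩ := exists_limit_operators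
    (LinearMap.toContinuousLinearMap φ) (norm_toContinuousLinearMap_pow_le φ hunit hpos)
  have hQx : ∀ x, Tendsto (fun k => (φ ^ m k) x) atTop (𝓝 (Q x)) := fun x => by
    simpa only [toContinuousLinearMap_pow_apply] using
      tendsto_clm_apply hQ (tendsto_const_nhds (x := x))
  have hQle : ∀ z : M, 0 ≤ z → ∀ n : ℕ, ‖Q z‖ ≤ ‖(φ ^ n) z‖ := fun z hz n => by
    refine le_of_tendsto (hQx z).norm ?_
    filter_upwards [hm.eventually_ge_atTop n] with k hk
    exact norm_pow_antitone φ hunit hpos hz hk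
  have hS : IsCompact (Metric.sphere (0 : M) 1 ∩ {z | 0 ≤ z}) :=
    (isCompact_sphere 0 1).inter_right CStarAlgebra.isClosed_nonneg
  obtain ⟨c, hc, hcS⟩ : ∃ c > (0 : ℝ), ∀ z ∈ Metric.sphere (0 : M) 1 ∩ {z | 0 ≤ z}, c ≤ ‖Q z‖ := by
    rcases (Metric.sphere (0 : M) 1 ∩ {z | 0 ≤ z}).eq_empty_or_nonempty with he | hne
    · exact ⟨1, one_pos, by simp [he]⟩
    · obtain ⟨z₀, hz₀, hmin⟩ := hS.exists_isMinOn hne (Q.continuous.norm.continuousOn)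
      refine ⟨‖Q z₀‖, norm_pos_iff.2 fun h0 => ?_, fun z hz => hmin hz⟩
      have hz : z₀ = 0 := eq_zero_of_tendsto_subseq φ hunit hpos hdet hz₀.2 hm (h0 ▸ hQx z₀)
      have h1 := hz₀.1
      simp [hz] at h1
  refine ⟨c, hc, fun z hz n => (?_ : c * ‖z‖ ≤ ‖Q z‖).trans (hQle z hz n)⟩
  rcases eq_or_ne z 0 with rfl | hz0
  · simp
  have hnz : 0 < ‖z‖ := norm_pos_iff.2 hz0
  have := hcS (‖z‖⁻¹ • z) ⟨by simp [norm_smul, hnz.ne'], smul_nonneg (by positivity) hz⟩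
  rw [← Complex.coe_smul, map_smul, norm_smul] at this
  simp only [Complex.norm_real, norm_inv, norm_norm] at this
  rwa [le_inv_mul_iff₀ hnz, mul_comm] at this

end Tail

/-- for a UP map on a finite-dimensional C*-algebra such that `‖φ^n(x)‖ → 0`
implies `x = 0` for positive `x`, the tail operator system equals the multiplicative core. -/
theorem tailSystem_eq_multCore_of_norm_detecting
    {M : Type*} [CStarAlgebra M] [PartialOrder M] [StarOrderedRing M]
    [FiniteDimensional ℂ M]
    (φ : M →ₗ[ℂ] M) (hunit : φ 1 = 1)
    (hpos : ∀ x : M, 0 ≤ x → 0 ≤ φ x)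
    (hdet : ∀ x : M, 0 ≤ x → Tendsto (fun n : ℕ => ‖(φ ^ n) x‖) atTop (𝓝 0) → x = 0) :
    tailSystem φ = multCore φ := by
  apply Set.Subset.antisymm
  · intro y hy
    refine Set.mem_iInter₂.2 fun n _ => ?_
    obtain ⟨x, hx, hxy⟩ := exists_tailSystem_preimage φ hunit hpos hy n
    exact ⟨x, fun j => tailSystem_subset_definiteSet φ hunit hpos hdet
      (tailSystem_map_mem φ hunit hpos hx j), hxy⟩
  · intro y hy
    obtain ⟨c, hc, hlow⟩ := exists_uniform_lower_bound φ hunit hpos hdet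
    -- Preimages `x` of `y` in `B_φ` satisfy `‖x‖² ≤ 2 ‖x* ∘ x‖ ≤ 2 ‖y* ∘ y‖ / c`.
    refine ⟨√(2 * (‖jordan (star y) y‖ / c)) + 1, by positivity, fun n hn => ?_⟩
    obtain ⟨x, hx, hxy⟩ := Set.mem_iInter₂.1 hy n hn
    refine ⟨x, ?_, hxy⟩
    have h1 := hlow _ (jordan_star_self_nonneg x) n
    rw [pow_jordan_of_mem_Bset φ hx n, hxy, mul_comm, ← le_div_iff₀ hc] at h1
    have h2 : ‖x‖ ≤ √(2 * (‖jordan (star y) y‖ / c)) :=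
      Real.le_sqrt_of_sq_le ((norm_sq_le_norm_jordan x).trans (by gcongr))
    linarith
end

section
/- Let M be a unital C*-algebra that is finite-dimensional as a complex vector space and let φ : M → M be a UP map. Then the tail operator system M_∞ is closed under the Jordan product x ∘ y = (x·y + y·x)/2 if and only if M_∞ equals the multiplicative core C_φ. -/
namespace UPMap

open Filter Topology ComplexStarModule

set_option linter.unusedSectionVars false

variable {M : Type*} [CStarAlgebra M] [PartialOrder M] [StarOrderedRing M]

/-- A unital positive linear map `M → M`. -/
structure IsUP (φ : M →ₗ[ℂ] M) : Prop where
  map_one : φ 1 = 1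
  nonneg : ∀ x : M, 0 ≤ x → 0 ≤ φ x

/-! ### Elementary properties of unital positive maps -/

theorem IsUP.pow {φ : M →ₗ[ℂ] M} (h : IsUP φ) (n : ℕ) : IsUP (φ ^ n) := by
  induction n with
  | zero => exact ⟨rfl, fun x hx => hx⟩
  | succ k ih =>
    refine ⟨?_, fun x hx => ?_⟩
    · rw [pow_succ', Module.End.mul_apply, ih.map_one, h.map_one]
    · rw [pow_succ', Module.End.mul_apply]
      exact h.nonneg _ (ih.nonneg x hx)

theorem map_real_smul (φ : M →ₗ[ℂ] M) (r : ℝ) (x : M) : φ (r • x) = r • φ x := by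
  rw [← Complex.coe_smul, map_smul, Complex.coe_smul]

theorem IsUP.mono {φ : M →ₗ[ℂ] M} (h : IsUP φ) {x y : M} (hxy : x ≤ y) : φ x ≤ φ y := by
  have := h.nonneg _ (sub_nonneg.2 hxy)
  rwa [map_sub, sub_nonneg] at this

theorem IsUP.map_algebraMap {φ : M →ₗ[ℂ] M} (h : IsUP φ) (r : ℝ) :
    φ (algebraMap ℝ M r) = algebraMap ℝ M r := by
  rw [Algebra.algebraMap_eq_smul_one, map_real_smul, h.map_one]

theorem IsUP.isSelfAdjoint {φ : M →ₗ[ℂ] M} (h : IsUP φ) {a : M} (ha : IsSelfAdjoint a) :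
    IsSelfAdjoint (φ a) := by
  have h1 := IsSelfAdjoint.of_nonneg
    (h.nonneg _ (sub_nonneg.2 ha.le_algebraMap_norm_self))
  rw [map_sub, h.map_algebraMap] at h1
  have h2 : IsSelfAdjoint (algebraMap ℝ M ‖a‖) := .algebraMap M (.all _)
  simpa using h2.sub h1

theorem IsUP.map_star {φ : M →ₗ[ℂ] M} (h : IsUP φ) (x : M) : φ (star x) = star (φ x) := by
  conv_lhs => rw [← realPart_add_I_smul_imaginaryPart x]
  conv_rhs => rw [← realPart_add_I_smul_imaginaryPart x]
  simp only [star_add, star_smul, map_add, map_smul, (ℜ x).2.star_eq, (ℑ x).2.star_eq,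
    (h.isSelfAdjoint (ℜ x).2).star_eq, (h.isSelfAdjoint (ℑ x).2).star_eq]

theorem IsUP.realPart_map {φ : M →ₗ[ℂ] M} (h : IsUP φ) (x : M) :
    ((ℜ (φ x) : selfAdjoint M) : M) = φ (ℜ x : selfAdjoint M) := by
  simp only [realPart_apply_coe, map_real_smul, map_add, h.map_star]

/-! ### Kadison's inequality -/

theorem finite_real_spectrum [FiniteDimensional ℂ M] (a : M) : (spectrum ℝ a).Finite := by
  have : FiniteDimensional ℝ M := FiniteDimensional.complexToReal M
  have hint : IsIntegral ℝ a := IsIntegral.of_finite ℝ a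
  refine ((minpoly ℝ a).rootSet_finite ℝ).subset fun k hk => ?_
  rw [Polynomial.mem_rootSet]
  refine ⟨minpoly.ne_zero hint, ?_⟩
  have h1 := spectrum.subset_polynomial_aeval a (minpoly ℝ a) ⟨k, hk, rfl⟩
  rw [minpoly.aeval] at h1
  rcases subsingleton_or_nontrivial M with hM | hM
  · simp at h1
  · simpa using h1

/-- Kadison's inequality: writing `a = ∑ λᵢ pᵢ` with spectral projections `pᵢ`, and `t = φ a`,
the sum `∑ (λᵢ - t) φ(pᵢ) (λᵢ - t)` is nonnegative and equals `φ (a²) - t²`. -/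
theorem IsUP.kadison [FiniteDimensional ℂ M] {φ : M →ₗ[ℂ] M} (h : IsUP φ) {a : M}
    (ha : IsSelfAdjoint a) : φ a * φ a ≤ φ (a * a) := by
  classical
  have hfin := finite_real_spectrum a
  set s := hfin.toFinset with hs
  have hcont : ∀ f : ℝ → ℝ, ContinuousOn f (spectrum ℝ a) := fun f => hfin.continuousOn f
  let p : ℝ → M := fun r => cfc (fun x : ℝ => if x = r then (1 : ℝ) else 0) a
  have hp : ∀ r, 0 ≤ p r := fun r => cfc_nonneg fun x _ => by split_ifs <;> simp
  have hsum : ∀ f : ℝ → ℝ, ∑ r ∈ s, f r • p r = cfc f a := by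
    intro f
    have : ∀ r ∈ s, f r • p r = cfc (fun x : ℝ => f r * if x = r then (1 : ℝ) else 0) a := by
      intro r _
      exact (cfc_const_mul _ _ a (hcont _)).symm
    rw [Finset.sum_congr rfl this, ← cfc_sum _ _ _ fun _ _ => hcont _]
    refine cfc_congr fun x hx => ?_
    have hxs : x ∈ s := by simpa [hs] using hx
    simp [Finset.sum_apply, hxs]
  have h1 : ∑ r ∈ s, φ (p r) = 1 := by
    have := hsum fun _ => 1
    rw [cfc_const_one ℝ a] at this
    simpa [h.map_one] using congrArg φ this
  have ha1 : ∑ r ∈ s, r • φ (p r) = φ a := by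
    have := hsum fun x => x
    rw [cfc_id' ℝ a] at this
    simpa [map_real_smul] using congrArg φ this
  have ha2 : ∑ r ∈ s, (r * r) • φ (p r) = φ (a * a) := by
    have := hsum fun x => x * x
    rw [cfc_mul (fun x : ℝ => x) (fun x : ℝ => x) a (hcont _) (hcont _), cfc_id' ℝ a] at this
    simpa [map_real_smul] using congrArg φ this
  have hta := h.isSelfAdjoint ha
  have hpos : 0 ≤ ∑ r ∈ s, (r • (1 : M) - φ a) * φ (p r) * (r • (1 : M) - φ a) :=
    Finset.sum_nonneg fun r _ => IsSelfAdjoint.conjugate_nonneg (h.nonneg _ (hp r))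
      ((IsSelfAdjoint.smul (IsSelfAdjoint.all r) (IsSelfAdjoint.one M)).sub hta)
  have hexp : ∀ r ∈ s, (r • (1 : M) - φ a) * φ (p r) * (r • (1 : M) - φ a) =
      (r * r) • φ (p r) - (r • φ (p r)) * φ a - φ a * (r • φ (p r)) + φ a * φ (p r) * φ a := by
    intro r _
    simp only [sub_mul, mul_sub, smul_mul_assoc, mul_smul_comm, one_mul, mul_one, smul_sub, mul_smul]
    abel
  rw [Finset.sum_congr rfl hexp, Finset.sum_add_distrib, Finset.sum_sub_distrib,
    Finset.sum_sub_distrib, ← Finset.sum_mul, ← Finset.mul_sum, ← Finset.sum_mul,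
    ← Finset.mul_sum, h1, ha1, ha2] at hpos
  rw [← sub_nonneg]
  simpa using hpos

theorem IsUP.norm_map_le_of_isSelfAdjoint [FiniteDimensional ℂ M] {φ : M →ₗ[ℂ] M}
    (h : IsUP φ) {a : M} (ha : IsSelfAdjoint a) : ‖φ a‖ ≤ ‖a‖ := by
  have hs := h.isSelfAdjoint ha
  have haa : IsSelfAdjoint (a * a) := by rw [isSelfAdjoint_iff, star_mul, ha.star_eq]
  have h1 : φ a * φ a ≤ algebraMap ℝ M ‖a * a‖ :=
    (h.kadison ha).trans ((h.mono haa.le_algebraMap_norm_self).trans (h.map_algebraMap _).le)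
  have h2 : ‖φ a * φ a‖ ≤ ‖a * a‖ :=
    (CStarAlgebra.norm_le_iff_le_algebraMap _ (norm_nonneg _) hs.mul_self_nonneg).2 h1
  rw [hs.norm_mul_self, ha.norm_mul_self] at h2
  exact (sq_le_sq₀ (norm_nonneg _) (norm_nonneg _)).1 h2

theorem IsUP.norm_map_le [FiniteDimensional ℂ M] {φ : M →ₗ[ℂ] M}
    (h : IsUP φ) (x : M) : ‖φ x‖ ≤ 2 * ‖x‖ := by
  have h1 := (h.norm_map_le_of_isSelfAdjoint (ℜ x).2).trans (realPart.norm_le x)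
  have h2 := (h.norm_map_le_of_isSelfAdjoint (ℑ x).2).trans (imaginaryPart.norm_le x)
  conv_lhs => rw [← realPart_add_I_smul_imaginaryPart x, map_add, map_smul]
  refine (norm_add_le _ _).trans ?_
  rw [norm_smul, Complex.norm_I]
  linarith

/-! ### The definite set -/

theorem jordan_add_left (x y z : M) : jordan (x + y) z = jordan x z + jordan y z := by
  simp only [jordan, add_mul, mul_add, ← smul_add]
  congr 1
  abel

theorem jordan_add_right (x y z : M) : jordan x (y + z) = jordan x y + jordan x z := by
  simp only [jordan, add_mul, mul_add, ← smul_add]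
  congr 1
  abel

theorem jordan_smul_left (c : ℂ) (x y : M) : jordan (c • x) y = c • jordan x y := by
  simp only [jordan, smul_mul_assoc, mul_smul_comm, ← smul_add]
  rw [smul_comm]

theorem jordan_smul_right (c : ℂ) (x y : M) : jordan x (c • y) = c • jordan x y := by
  simp only [jordan, smul_mul_assoc, mul_smul_comm, ← smul_add]
  rw [smul_comm]

theorem jordan_of_commute {x y : M} (h : x * y = y * x) : jordan x y = x * y := by
  rw [jordan, ← h, ← two_smul ℂ, smul_smul]
  norm_num

theorem jordan_star_self {a b : M} (ha : IsSelfAdjoint a) (hb : IsSelfAdjoint b) :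
    jordan (star (a + Complex.I • b)) (a + Complex.I • b) = a * a + b * b := by
  have h : jordan (star (a + Complex.I • b)) (a + Complex.I • b)
      = (2⁻¹ : ℂ) • ((2 : ℂ) • (a * a + b * b)) := by
    rw [jordan]
    congr 1
    simp only [star_add, star_smul, ha.star_eq, hb.star_eq, add_mul, mul_add, smul_mul_assoc,
      mul_smul_comm, smul_smul, RCLike.star_def, Complex.conj_I, neg_mul, mul_neg,
      Complex.I_mul_I, two_smul, neg_smul, neg_neg, one_smul, smul_add, smul_neg]
    abel
  rw [h, smul_smul]
  norm_num

/-- A self-adjoint element at which Kadison's inequality is an equality. -/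
def SADef (φ : M →ₗ[ℂ] M) (a : M) : Prop := IsSelfAdjoint a ∧ φ (a * a) = φ a * φ a

variable [FiniteDimensional ℂ M] {φ : M →ₗ[ℂ] M}

/-- Polarization of the equality case: the defect of `a + t b` in Kadison's inequality has no
constant term in `t`, so its nonnegativity for all real `t` kills the linear term. -/
theorem SADef.cross (h : IsUP φ) {a b : M} (ha : SADef φ a) (hb : IsSelfAdjoint b) :
    φ (a * b + b * a) = φ a * φ b + φ b * φ a := by
  set D := φ (a * b + b * a) - (φ a * φ b + φ b * φ a) with hD
  set E := φ (b * b) - φ b * φ b with hE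
  have key : ∀ t : ℝ, 0 ≤ t • (D + t • E) := by
    intro t
    have h1 := sub_nonneg.2 (h.kadison (ha.1.add (IsSelfAdjoint.smul (IsSelfAdjoint.all t) hb)))
    convert h1 using 1
    simp only [hD, hE, add_mul, mul_add, smul_mul_assoc, mul_smul_comm, map_add, map_real_smul,
      smul_add, smul_sub, ha.2]
    abel
  have hcancel : ∀ {t : ℝ} {x : M}, 0 < t → 0 ≤ t • x → 0 ≤ x := by
    intro t x ht hx
    have := smul_nonneg (inv_nonneg.2 ht.le) hx
    rwa [smul_smul, inv_mul_cancel₀ ht.ne', one_smul] at this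
  have hlow : ∀ t : ℝ, 0 < t → 0 ≤ D + t • E := fun t ht => hcancel ht (key t)
  have hup : ∀ t : ℝ, 0 < t → 0 ≤ -D + t • E := by
    intro t ht
    refine hcancel ht ?_
    convert key (-t) using 1
    simp only [smul_add, smul_neg, neg_smul, neg_neg]
  have hlim : ∀ X : M, Tendsto (fun t : ℝ => X + t • E) (𝓝[>] 0) (𝓝 X) := by
    intro X
    have : ContinuousAt (fun t : ℝ => X + t • E) 0 := by fun_prop
    have h0 := this.tendsto
    simp only [zero_smul, add_zero] at h0
    exact h0.mono_left nhdsWithin_le_nhds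
  have hD0 : 0 ≤ D := ge_of_tendsto (hlim D) (eventually_mem_nhdsWithin.mono hlow)
  have hD1 : 0 ≤ -D := ge_of_tendsto (hlim (-D)) (eventually_mem_nhdsWithin.mono hup)
  exact sub_eq_zero.1 (le_antisymm (neg_nonneg.1 hD1) hD0)

theorem SADef.map_jordan (h : IsUP φ) {a : M} (ha : SADef φ a) (z : M) :
    φ (jordan a z) = jordan (φ a) (φ z) := by
  have hsa : ∀ b : M, IsSelfAdjoint b → φ (jordan a b) = jordan (φ a) (φ b) := by
    intro b hb
    rw [jordan, jordan, map_smul, ha.cross h hb]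
  rw [← realPart_add_I_smul_imaginaryPart z]
  simp only [map_add, map_smul, jordan_add_right, jordan_smul_right, hsa _ (ℜ z).2,
    hsa _ (ℑ z).2]

theorem SADef.add (h : IsUP φ) {a b : M} (ha : SADef φ a) (hb : SADef φ b) :
    SADef φ (a + b) := by
  refine ⟨ha.1.add hb.1, ?_⟩
  have h1 := ha.cross h hb.1
  rw [map_add] at h1
  simp only [add_mul, mul_add, map_add, ha.2, hb.2]
  calc φ a * φ a + φ (b * a) + (φ (a * b) + φ b * φ b)
      = φ a * φ a + (φ (a * b) + φ (b * a)) + φ b * φ b := by abel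
    _ = _ := by rw [h1]; abel

theorem SADef.smul {a : M} (ha : SADef φ a) (r : ℝ) : SADef φ (r • a) := by
  refine ⟨IsSelfAdjoint.smul (IsSelfAdjoint.all r) ha.1, ?_⟩
  simp only [smul_mul_assoc, mul_smul_comm, map_real_smul, ha.2]

theorem SADef.mul_self (h : IsUP φ) {a : M} (ha : SADef φ a) : SADef φ (a * a) := by
  refine ⟨by rw [isSelfAdjoint_iff, star_mul, ha.1.star_eq], ?_⟩
  have h3 : φ (a * (a * a)) = φ a * (φ a * φ a) := by
    have := ha.map_jordan h (a * a)
    rwa [jordan_of_commute (mul_assoc _ _ _).symm, ha.2, jordan_of_commute (mul_assoc _ _ _).symm]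
      at this
  have h4 := ha.map_jordan h (a * (a * a))
  rw [jordan_of_commute (by simp only [mul_assoc]), h3,
    jordan_of_commute (by simp only [mul_assoc])] at h4
  rw [ha.2]
  simpa only [mul_assoc] using h4

theorem SADef.mem {a : M} (h : IsUP φ) (ha : SADef φ a) : a ∈ definiteSet φ := by
  change φ (jordan (star a) a) = jordan (star (φ a)) (φ a)
  rw [ha.1.star_eq, (h.isSelfAdjoint ha.1).star_eq, jordan_of_commute rfl, jordan_of_commute rfl,
    ha.2]

theorem mem_definiteSet_iff (h : IsUP φ) (x : M) :
    x ∈ definiteSet φ ↔ SADef φ (ℜ x : selfAdjoint M) ∧ SADef φ (ℑ x : selfAdjoint M) := by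
  set a : M := ((ℜ x : selfAdjoint M) : M) with ha
  set b : M := ((ℑ x : selfAdjoint M) : M) with hb
  have hsa : IsSelfAdjoint a := (ℜ x).2
  have hsb : IsSelfAdjoint b := (ℑ x).2
  have hx : x = a + Complex.I • b := (realPart_add_I_smul_imaginaryPart x).symm
  have h1 : φ (jordan (star x) x) = φ (a * a) + φ (b * b) := by
    rw [hx, jordan_star_self hsa hsb, map_add]
  have h2 : jordan (star (φ x)) (φ x) = φ a * φ a + φ b * φ b := by
    rw [hx, map_add, map_smul, jordan_star_self (h.isSelfAdjoint hsa) (h.isSelfAdjoint hsb)]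
  change φ (jordan (star x) x) = jordan (star (φ x)) (φ x) ↔ _
  rw [h1, h2]
  constructor
  · intro heq
    obtain ⟨e1, e2⟩ := (add_eq_add_iff_eq_and_eq (h.kadison hsa) (h.kadison hsb)).1 heq.symm
    exact ⟨⟨hsa, e1.symm⟩, ⟨hsb, e2.symm⟩⟩
  · rintro ⟨e1, e2⟩
    rw [e1.2, e2.2]

/-- The definite set as a complex subspace. -/
noncomputable def definiteSub (h : IsUP φ) : Submodule ℂ M where
  carrier := definiteSet φ
  zero_mem' := SADef.mem h ⟨.zero M, by simp⟩
  add_mem' := by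
    intro x y hx hy
    rw [mem_definiteSet_iff h] at hx hy ⊢
    rw [map_add, map_add]
    exact ⟨hx.1.add h hy.1, hx.2.add h hy.2⟩
  smul_mem' := by
    intro c x hx
    rw [mem_definiteSet_iff h] at hx ⊢
    rw [realPart_smul, imaginaryPart_smul, sub_eq_add_neg, ← neg_smul]
    exact ⟨(hx.1.smul _).add h (hx.2.smul _), (hx.2.smul _).add h (hx.1.smul _)⟩

theorem mem_definiteSub (h : IsUP φ) (x : M) : x ∈ definiteSub h ↔ x ∈ definiteSet φ := Iff.rfl

theorem star_mem_definiteSet (h : IsUP φ) {x : M} (hx : x ∈ definiteSet φ) :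
    star x ∈ definiteSet φ := by
  have hcomm : ∀ y z : M, jordan y z = jordan z y := fun y z => by rw [jordan, jordan, add_comm]
  change φ (jordan (star (star x)) (star x)) = jordan (star (φ (star x))) (φ (star x))
  rw [h.map_star, star_star, star_star, hcomm x, hcomm (φ x)]
  exact hx

theorem map_jordan_of_mem (h : IsUP φ) {x : M} (hx : x ∈ definiteSet φ) (z : M) :
    φ (jordan x z) = jordan (φ x) (φ z) := by
  rw [mem_definiteSet_iff h] at hx
  conv_lhs => rw [← realPart_add_I_smul_imaginaryPart x]
  conv_rhs => rw [← realPart_add_I_smul_imaginaryPart x]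
  simp only [map_add, map_smul, jordan_add_left, jordan_smul_left, hx.1.map_jordan h,
    hx.2.map_jordan h]

theorem jordan_mem_definiteSet (h : IsUP φ) {x y : M} (hx : x ∈ definiteSet φ)
    (hy : y ∈ definiteSet φ) : jordan x y ∈ definiteSet φ := by
  have hsa : ∀ {a b : M}, SADef φ a → SADef φ b → jordan a b ∈ definiteSub h := by
    intro a b ha hb
    have e : jordan a b = (2⁻¹ : ℂ) • ((a + b) * (a + b) - a * a - b * b) := by
      rw [jordan]
      congr 1
      simp only [add_mul, mul_add]
      abel
    rw [e]
    exact Submodule.smul_mem _ _ (Submodule.sub_mem _ (Submodule.sub_mem _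
      (((ha.add h hb).mul_self h).mem h) ((ha.mul_self h).mem h)) ((hb.mul_self h).mem h))
  rw [mem_definiteSet_iff h] at hx hy
  rw [← mem_definiteSub h, ← realPart_add_I_smul_imaginaryPart x,
    ← realPart_add_I_smul_imaginaryPart y]
  simp only [jordan_add_left, jordan_smul_left, jordan_add_right, jordan_smul_right]
  exact Submodule.add_mem _
    (Submodule.add_mem _ (hsa hx.1 hy.1) (Submodule.smul_mem _ _ (hsa hx.2 hy.1)))
    (Submodule.smul_mem _ _
      (Submodule.add_mem _ (hsa hx.1 hy.2) (Submodule.smul_mem _ _ (hsa hx.2 hy.2))))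

/-! ### The set `B_φ` and the multiplicative core -/

/-- `B_φ` as a complex subspace. -/
noncomputable def Bsub (h : IsUP φ) : Submodule ℂ M where
  carrier := Bset φ
  zero_mem' n := by
    rw [map_zero]
    exact (definiteSub h).zero_mem
  add_mem' := by
    intro x y hx hy n
    rw [map_add]
    exact (definiteSub h).add_mem (hx n) (hy n)
  smul_mem' := by
    intro c x hx n
    rw [map_smul]
    exact (definiteSub h).smul_mem c (hx n)

theorem pow_map_jordan (h : IsUP φ) {x y : M} (hx : x ∈ Bset φ) (n : ℕ) :
    (φ ^ n) (jordan x y) = jordan ((φ ^ n) x) ((φ ^ n) y) := by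
  induction n with
  | zero => rfl
  | succ k ih =>
    rw [pow_succ', Module.End.mul_apply, ih, map_jordan_of_mem h (hx k)]
    rfl

theorem jordan_mem_Bset (h : IsUP φ) {x y : M} (hx : x ∈ Bset φ) (hy : y ∈ Bset φ) :
    jordan x y ∈ Bset φ := by
  intro n
  rw [pow_map_jordan h hx]
  exact jordan_mem_definiteSet h (hx n) (hy n)

theorem star_mem_Bset (h : IsUP φ) {x : M} (hx : x ∈ Bset φ) : star x ∈ Bset φ := by
  intro n
  rw [(h.pow n).map_star]
  exact star_mem_definiteSet h (hx n)

theorem pow_mem_Bset {x : M} (hx : x ∈ Bset φ) (m : ℕ) : (φ ^ m) x ∈ Bset φ := by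
  intro n
  rw [← Module.End.mul_apply, ← pow_add]
  exact hx _

theorem jordan_mem_multCore (h : IsUP φ) {x y : M} (hx : x ∈ multCore φ) (hy : y ∈ multCore φ) :
    jordan x y ∈ multCore φ := by
  simp only [multCore, Set.mem_iInter] at hx hy ⊢
  intro n hn
  obtain ⟨a, ha, rfl⟩ := hx n hn
  obtain ⟨b, hb, rfl⟩ := hy n hn
  exact ⟨jordan a b, jordan_mem_Bset h ha hb, pow_map_jordan h ha n⟩

/-! ### The multiplicative core lies in the tail system -/

/-- The tail system as a complex subspace. -/
noncomputable def tailSub (φ : M →ₗ[ℂ] M) : Submodule ℂ M where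
  carrier := tailSystem φ
  zero_mem' := ⟨1, one_pos, fun n _ => ⟨0, by simp, map_zero _⟩⟩
  add_mem' := by
    rintro x y ⟨C, hC, hx⟩ ⟨D, hD, hy⟩
    refine ⟨C + D, add_pos hC hD, fun n hn => ?_⟩
    obtain ⟨a, ha, rfl⟩ := hx n hn
    obtain ⟨b, hb, hab⟩ := hy n hn
    exact ⟨a + b, (norm_add_le _ _).trans (add_le_add ha hb), by rw [map_add, hab]⟩
  smul_mem' := by
    rintro c x ⟨C, hC, hx⟩
    refine ⟨(‖c‖ + 1) * C, by positivity, fun n hn => ?_⟩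
    obtain ⟨a, ha, rfl⟩ := hx n hn
    refine ⟨c • a, ?_, map_smul _ _ _⟩
    rw [norm_smul]
    gcongr
    linarith

theorem mem_tailSub {x : M} : x ∈ tailSub φ ↔ x ∈ tailSystem φ := Iff.rfl

theorem le_of_forall_pow_two_pow_le {u v K : ℝ} (hu : 0 ≤ u)
    (hK : ∀ k : ℕ, v ^ 2 ^ k ≤ K * u ^ 2 ^ k) : v ≤ u := by
  by_contra! huv
  have hv : 0 < v := hu.trans_lt huv
  have hr1 : u / v < 1 := (div_lt_one hv).2 huv
  have hr0 : 0 ≤ u / v := div_nonneg hu hv.le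
  obtain ⟨n, hn⟩ := exists_pow_lt_of_lt_one (show (0 : ℝ) < (|K| + 1)⁻¹ by positivity) hr1
  have h1 : (u / v) ^ 2 ^ n < (|K| + 1)⁻¹ :=
    (pow_le_pow_of_le_one hr0 hr1.le Nat.lt_two_pow_self.le).trans_lt hn
  have h2 : 1 ≤ K * (u / v) ^ 2 ^ n := by
    rw [div_pow, ← mul_div_assoc, le_div_iff₀ (by positivity), one_mul]
    exact hK n
  have h3 : K * (u / v) ^ 2 ^ n ≤ |K| * (|K| + 1)⁻¹ := by
    have := pow_nonneg hr0 (2 ^ n)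
    calc K * (u / v) ^ 2 ^ n ≤ |K| * (u / v) ^ 2 ^ n := by gcongr; exact le_abs_self K
      _ ≤ _ := by gcongr
  have h4 : |K| * (|K| + 1)⁻¹ < 1 := by
    rw [← div_eq_mul_inv, div_lt_one (by positivity)]
    linarith
  linarith

/-- The images `φ^n(B_φ)` decrease, so by finite-dimensionality they stabilize at a subspace
that `φ` maps onto itself. -/
theorem exists_stable_image (h : IsUP φ) :
    ∃ N : ℕ, multCore φ ⊆ (Bsub h).map (φ ^ N) ∧
      ((Bsub h).map (φ ^ N)).map φ = (Bsub h).map (φ ^ N) := by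
  let f : ℕ →o (Submodule ℂ M)ᵒᵈ :=
    { toFun := fun n => OrderDual.toDual ((Bsub h).map (φ ^ n))
      monotone' := by
        refine monotone_nat_of_le_succ fun n => ?_
        change (Bsub h).map (φ ^ (n + 1)) ≤ (Bsub h).map (φ ^ n)
        rintro _ ⟨x, hx, rfl⟩
        exact ⟨(φ ^ 1) x, pow_mem_Bset hx 1, by rw [← Module.End.mul_apply, ← pow_add]⟩ }
  obtain ⟨N, hN⟩ := IsArtinian.monotone_stabilizes f
  have hN' : ∀ m, N ≤ m → (Bsub h).map (φ ^ N) = (Bsub h).map (φ ^ m) := fun m hm => hN m hm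
  refine ⟨N + 1, fun x hx => ?_, ?_⟩
  · simp only [multCore, Set.mem_iInter] at hx
    obtain ⟨b, hb, rfl⟩ := hx (N + 1) (by omega)
    exact ⟨b, hb, rfl⟩
  · rw [← Submodule.map_comp, ← Module.End.mul_eq_comp, ← pow_succ', ← hN' _ (by omega),
      ← hN' (N + 1) (by omega)]

/-- On the stable image `C` of `B_φ` the map `φ` is a bijective Jordan homomorphism, so it does not
decrease norms of self-adjoint elements; preimages under `φ^n` inside `C` are therefore uniformly
bounded. -/
theorem multCore_subset_tailSystem (h : IsUP φ) : multCore φ ⊆ tailSystem φ := by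
  obtain ⟨N, hsub, hstab⟩ := exists_stable_image h
  set C := (Bsub h).map (φ ^ N) with hC
  have hCB : ∀ x ∈ C, x ∈ Bset φ := by
    rintro _ ⟨b, hb, rfl⟩
    exact pow_mem_Bset hb N
  have hCsq : ∀ x ∈ C, x * x ∈ C := by
    rintro _ ⟨b, hb, rfl⟩
    refine ⟨jordan b b, jordan_mem_Bset h hb hb, ?_⟩
    rw [pow_map_jordan h hb, jordan_of_commute rfl]
  have hCstar : ∀ x ∈ C, star x ∈ C := by
    rintro _ ⟨b, hb, rfl⟩
    exact ⟨star b, star_mem_Bset h hb, (h.pow N).map_star b⟩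
  have hCre : ∀ x ∈ C, ((ℜ x : selfAdjoint M) : M) ∈ C := by
    intro x hx
    rw [realPart_apply_coe, ← Complex.coe_smul]
    exact C.smul_mem _ (C.add_mem hx (hCstar x hx))
  have hCim : ∀ x ∈ C, ((ℑ x : selfAdjoint M) : M) ∈ C := by
    intro x hx
    rw [imaginaryPart_apply_coe, ← Complex.coe_smul]
    exact C.smul_mem _ (C.smul_mem _ (C.sub_mem hx (hCstar x hx)))
  have hmaps : ∀ x ∈ C, φ x ∈ C := by
    intro x hx
    rw [← hstab]
    exact Submodule.mem_map_of_mem hx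
  have hinj : Function.Injective (φ.restrict hmaps) := by
    rw [LinearMap.injective_iff_surjective]
    rintro ⟨y, hy⟩
    have hy' := hy
    rw [← hstab] at hy'
    obtain ⟨x, hx, hxy⟩ := hy'
    exact ⟨⟨x, hx⟩, Subtype.ext hxy⟩
  obtain ⟨K, -, hK⟩ := LinearMap.exists_antilipschitzWith _ (LinearMap.ker_eq_bot.2 hinj)
  have hbound : ∀ x ∈ C, ‖x‖ ≤ K * ‖φ x‖ := by
    intro x hx
    have := hK.le_mul_dist ⟨x, hx⟩ 0
    rw [map_zero, dist_zero_right, dist_zero_right] at this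
    exact this
  -- `φ` respects the powers `x ^ 2 ^ k` on `C`, so the constant `K` improves to `1`.
  have hpow : ∀ x ∈ C, ∀ k : ℕ, x ^ 2 ^ k ∈ C ∧ φ (x ^ 2 ^ k) = φ x ^ 2 ^ k := by
    intro x hx k
    induction k with
    | zero => simpa using hx
    | succ k ih =>
      have e : ∀ z : M, z ^ 2 ^ (k + 1) = z ^ 2 ^ k * z ^ 2 ^ k := fun z => by
        rw [← pow_add, pow_succ, mul_two]
      rw [e, e, ← ih.2]
      refine ⟨hCsq _ ih.1, ?_⟩
      have := map_jordan_of_mem h (hCB _ ih.1 0) (x ^ 2 ^ k)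
      simpa only [pow_zero, Module.End.one_apply, jordan_of_commute] using this
  have hexp : ∀ x ∈ C, IsSelfAdjoint x → ‖x‖ ≤ ‖φ x‖ := by
    intro x hx hsx
    refine le_of_forall_pow_two_pow_le (K := K) (norm_nonneg _) fun k => ?_
    rw [← hsx.norm_pow_two_pow, ← (h.isSelfAdjoint hsx).norm_pow_two_pow, ← (hpow x hx k).2]
    exact hbound _ (hpow x hx k).1
  have hlift : ∀ n : ℕ, ∀ y ∈ C, IsSelfAdjoint y → ∃ x ∈ C, IsSelfAdjoint x ∧ ‖x‖ ≤ ‖y‖ ∧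
      (φ ^ n) x = y := by
    intro n
    induction n with
    | zero => exact fun y hy hs => ⟨y, hy, hs, le_rfl, rfl⟩
    | succ n ih =>
      intro y hy hs
      obtain ⟨x, hx, hsx, hxy, rfl⟩ := ih y hy hs
      obtain ⟨w, hw, rfl⟩ := (hstab.symm ▸ hx : x ∈ C.map φ)
      have hre : φ (ℜ w : selfAdjoint M) = φ w := by
        rw [← h.realPart_map, hsx.coe_realPart]
      refine ⟨(ℜ w : selfAdjoint M), hCre w hw, (ℜ w).2, ?_, ?_⟩
      · refine (hexp _ (hCre w hw) (ℜ w).2).trans ?_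
        rw [hre]
        exact hxy
      · rw [pow_succ, Module.End.mul_apply, hre]
  have hsa : ∀ y ∈ C, IsSelfAdjoint y → y ∈ tailSub φ := by
    intro y hy hs
    refine ⟨‖y‖ + 1, by positivity, fun n _ => ?_⟩
    obtain ⟨x, -, -, hxy, hx⟩ := hlift n y hy hs
    exact ⟨x, by linarith, hx⟩
  intro y hy
  rw [← mem_tailSub, ← realPart_add_I_smul_imaginaryPart y]
  exact Submodule.add_mem _ (hsa _ (hCre y (hsub hy)) (ℜ y).2)
    (Submodule.smul_mem _ _ (hsa _ (hCim y (hsub hy)) (ℑ y).2))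

/-! ### Recurrence on the tail system -/

theorem map_mem_tailSub (h : IsUP φ) {x : M} (hx : x ∈ tailSub φ) : φ x ∈ tailSub φ := by
  obtain ⟨C, hC, hx⟩ := hx
  refine ⟨2 * C, by positivity, fun n hn => ?_⟩
  obtain ⟨a, ha, rfl⟩ := hx n hn
  refine ⟨φ a, (h.norm_map_le a).trans (by linarith), ?_⟩
  rw [← Module.End.mul_apply, ← Module.End.mul_apply, ← pow_succ, ← pow_succ']

theorem pow_map_mem_tailSub (h : IsUP φ) {x : M} (hx : x ∈ tailSub φ) (n : ℕ) :
    (φ ^ n) x ∈ tailSub φ := by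
  induction n with
  | zero => exact hx
  | succ n ih =>
    rw [pow_succ', Module.End.mul_apply]
    exact map_mem_tailSub h ih

theorem star_mem_tailSub (h : IsUP φ) {x : M} (hx : x ∈ tailSub φ) : star x ∈ tailSub φ := by
  obtain ⟨C, hC, hx⟩ := hx
  refine ⟨C, hC, fun n hn => ?_⟩
  obtain ⟨a, ha, rfl⟩ := hx n hn
  exact ⟨star a, by rwa [norm_star], (h.pow n).map_star a⟩

/-- Some sequence of positive powers of `φ` converges pointwise to the identity on the tail
system. If `φ^{n_j} → Q`, then every tail element has the form `Q x`, and
`φ^{n_{j+1} - n_j} (Q x) → Q x`. -/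
theorem exists_recurrence (h : IsUP φ) :
    ∃ d : ℕ → ℕ, (∀ j, 1 ≤ d j) ∧
      ∀ a ∈ tailSub φ, Tendsto (fun j => (φ ^ d j) a) atTop (𝓝 a) := by
  have : ProperSpace M := FiniteDimensional.proper ℂ M
  have : ProperSpace (M →L[ℂ] M) := FiniteDimensional.proper ℂ _
  let F : ℕ → M →L[ℂ] M := fun n => LinearMap.toContinuousLinearMap (φ ^ n)
  have hF : ∀ n x, F n x = (φ ^ n) x := fun n x => rfl
  have hFnorm : ∀ n, F n ∈ Metric.closedBall (0 : M →L[ℂ] M) 2 := by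
    intro n
    rw [mem_closedBall_zero_iff]
    exact ContinuousLinearMap.opNorm_le_bound _ (by norm_num) fun x => (h.pow n).norm_map_le x
  obtain ⟨Q, -, ψ, hψ, hQ⟩ := (isCompact_closedBall _ _).tendsto_subseq hFnorm
  refine ⟨fun j => ψ (j + 1) - ψ j, fun j => ?_, fun a ha => ?_⟩
  · have := hψ (Nat.lt_add_one j)
    change 1 ≤ ψ (j + 1) - ψ j
    omega
  obtain ⟨C, hC, ha⟩ := ha
  have hψ1 : ∀ j, 1 ≤ ψ (j + 1) := fun j =>
    (Nat.le_add_left 1 j).trans (hψ.le_apply (x := j + 1))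
  choose x hx hxa using fun j => ha (ψ (j + 1)) (hψ1 j)
  have hxb : ∀ j, x j ∈ Metric.closedBall (0 : M) C := fun j => by
    rw [mem_closedBall_zero_iff]
    exact hx j
  obtain ⟨z, -, θ, hθ, hz⟩ := (isCompact_closedBall _ _).tendsto_subseq hxb
  have hQ1 : Tendsto (fun j => F (ψ (j + 1))) atTop (𝓝 Q) := (tendsto_add_atTop_iff_nat 1).2 hQ
  have haQ : a = Q z := by
    have h1 : Tendsto (fun j => F (ψ (θ j + 1)) (x (θ j))) atTop (𝓝 (Q z)) :=
      (isBoundedBilinearMap_apply.continuous.tendsto (Q, z)).comp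
        ((hQ1.comp hθ.tendsto_atTop).prodMk_nhds hz)
    simp only [hF, hxa] at h1
    exact tendsto_nhds_unique tendsto_const_nhds h1
  have hlim : Tendsto (fun j => F (ψ j) z) atTop (𝓝 a) := by
    rw [haQ]
    exact (isBoundedBilinearMap_apply.continuous.tendsto (Q, z)).comp
      (hQ.prodMk_nhds tendsto_const_nhds)
  have hlim1 : Tendsto (fun j => F (ψ (j + 1)) z) atTop (𝓝 a) :=
    (tendsto_add_atTop_iff_nat 1).2 hlim
  have hdiff : Tendsto (fun j => (φ ^ (ψ (j + 1) - ψ j)) (a - F (ψ j) z)) atTop (𝓝 0) := by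
    have h0 : Tendsto (fun j => 2 * ‖a - F (ψ j) z‖) atTop (𝓝 0) := by
      have := ((tendsto_const_nhds (x := a)).sub hlim).norm.const_mul 2
      simpa using this
    exact squeeze_zero_norm (fun j => (h.pow _).norm_map_le _) h0
  have hsum := hdiff.add hlim1
  rw [zero_add] at hsum
  refine hsum.congr fun j => ?_
  have hle : ψ j ≤ ψ (j + 1) := hψ.monotone (Nat.le_succ j)
  rw [map_sub, hF, hF, ← Module.End.mul_apply, ← pow_add, Nat.sub_add_cancel hle, sub_add_cancel]

theorem tailSub_map (h : IsUP φ) (n : ℕ) : (tailSub φ).map (φ ^ n) = tailSub φ := by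
  have h1 : (tailSub φ).map φ = tailSub φ := by
    refine le_antisymm ?_ fun a ha => ?_
    · rintro _ ⟨x, hx, rfl⟩
      exact map_mem_tailSub h hx
    · obtain ⟨d, hd, hlim⟩ := exists_recurrence h
      refine (Submodule.closed_of_finiteDimensional ((tailSub φ).map φ)).mem_of_tendsto
        (hlim a ha) (Eventually.of_forall fun j => ?_)
      refine ⟨(φ ^ (d j - 1)) a, pow_map_mem_tailSub h ha _, ?_⟩
      rw [← Module.End.mul_apply, ← pow_succ', Nat.sub_add_cancel (hd j)]
  induction n with
  | zero => exact Submodule.map_id _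
  | succ n ih => rw [pow_succ', Module.End.mul_eq_comp, Submodule.map_comp, ih, h1]

/-- If the square of `φ a` is again in the tail system, then Kadison's inequality is an equality
at `a`: pass to the limit in `φ ((φ^d a)²) ≤ φ^d ((φ a)²)` along the recurrence times `d`. -/
theorem sadef_of_mem_tailSub (h : IsUP φ) {a : M} (ha : a ∈ tailSub φ) (hs : IsSelfAdjoint a)
    (hsq : φ a * φ a ∈ tailSub φ) : SADef φ a := by
  refine ⟨hs, le_antisymm ?_ (h.kadison hs)⟩
  obtain ⟨d, hd, hlim⟩ := exists_recurrence h
  have hφ : Continuous φ := LinearMap.continuous_of_finiteDimensional φ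
  have h1 : Tendsto (fun j => φ ((φ ^ d j) a * (φ ^ d j) a)) atTop (𝓝 (φ (a * a))) :=
    (hφ.tendsto _).comp ((hlim a ha).mul (hlim a ha))
  refine le_of_tendsto_of_tendsto' h1 (hlim _ hsq) fun j => ?_
  have h2 := h.mono ((h.pow (d j - 1)).kadison (h.isSelfAdjoint hs))
  obtain ⟨m, hm⟩ : ∃ m, d j = m + 1 := ⟨d j - 1, (Nat.sub_add_cancel (hd j)).symm⟩
  rw [hm, Nat.add_sub_cancel, ← Module.End.mul_apply, ← Module.End.mul_apply, ← pow_succ] at h2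
  rw [hm]
  refine h2.trans (le_of_eq ?_)
  rw [← pow_succ']

theorem tailSystem_subset_multCore (h : IsUP φ)
    (hj : ∀ x ∈ tailSystem φ, ∀ y ∈ tailSystem φ, jordan x y ∈ tailSystem φ) :
    tailSystem φ ⊆ multCore φ := by
  have hsa : ∀ a ∈ tailSub φ, IsSelfAdjoint a → SADef φ a := by
    intro a ha hs
    refine sadef_of_mem_tailSub h ha hs ?_
    have := hj _ (map_mem_tailSub h ha) _ (map_mem_tailSub h ha)
    rwa [jordan_of_commute rfl] at this
  have hdef : ∀ x ∈ tailSub φ, x ∈ definiteSet φ := by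
    intro x hx
    rw [mem_definiteSet_iff h]
    refine ⟨hsa _ ?_ (ℜ x).2, hsa _ ?_ (ℑ x).2⟩
    · rw [realPart_apply_coe, ← Complex.coe_smul]
      exact Submodule.smul_mem _ _ (Submodule.add_mem _ hx (star_mem_tailSub h hx))
    · rw [imaginaryPart_apply_coe, ← Complex.coe_smul]
      exact Submodule.smul_mem _ _ (Submodule.smul_mem _ _
        (Submodule.sub_mem _ hx (star_mem_tailSub h hx)))
  intro y hy
  simp only [multCore, Set.mem_iInter]
  intro n _
  obtain ⟨x, hx, hxy⟩ := ((tailSub_map h n).symm ▸ hy : y ∈ (tailSub φ).map (φ ^ n))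
  exact ⟨x, fun m => hdef _ (pow_map_mem_tailSub h hx m), hxy⟩

end UPMap

/-- for a UP map on a finite-dimensional C*-algebra, the tail operator system
is closed under the Jordan product iff it equals the multiplicative core. -/
theorem tailSystem_jordan_closed_iff_eq_multCore
    {M : Type*} [CStarAlgebra M] [PartialOrder M] [StarOrderedRing M]
    [FiniteDimensional ℂ M]
    (φ : M →ₗ[ℂ] M) (hunit : φ 1 = 1)
    (hpos : ∀ x : M, 0 ≤ x → 0 ≤ φ x) :
    (∀ x ∈ tailSystem φ, ∀ y ∈ tailSystem φ, jordan x y ∈ tailSystem φ) ↔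
      tailSystem φ = multCore φ := by
  have h : UPMap.IsUP φ := ⟨hunit, hpos⟩
  constructor
  · intro hj
    exact (UPMap.tailSystem_subset_multCore h hj).antisymm (UPMap.multCore_subset_tailSystem h)
  · intro heq x hx y hy
    rw [heq] at hx hy ⊢
    exact UPMap.jordan_mem_multCore h hx hy
end
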